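/- Let n ≥ 2 and let V be an irreducible weight module for the extended Witt algebra 𝔏_{S,n} with finite dimensional but not uniformly bounded weight spaces. Then there exist β ∈ ℤ^n, a subgroup M of ℤ^n with ℤ^n = M ⊕ ℤβ, and an irreducible (𝔏_{S,n})_M-module Y such that V ≅ L_{𝔏_{S,n}}(Y, β, M), the unique irreducible subquotient of the generalised Verma module Ind from Y. -/

import Mathlib

open scoped TensorProduct

noncomputable section

namespace LoopWitt

/-- The standard pairing `(u | m)` between `ℂⁿ` and `ℤⁿ`. -/
def pairC {n : ℕ} (u : Fin n → ℂ) (m : Fin n → ℤ) : ℂ := ∑ i, u i * (m i : ℂ)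

/-- The standard pairing on `ℂⁿ`. -/
def pairCC {n : ℕ} (u lam : Fin n → ℂ) : ℂ := ∑ i, u i * lam i

/-- `ℤⁿ = K ⊕ ℤβ`. -/
def IsDirectSumDecomp {n : ℕ} (K : AddSubgroup (Fin n → ℤ)) (β : Fin n → ℤ) : Prop :=
  (∀ m : Fin n → ℤ, ∃ a ∈ K, ∃ d : ℤ, m = a + d • β) ∧ ∀ d : ℤ, d • β ∈ K → d = 0

/-- `r` lies in the positive part `K + ℕ₊ β` of `ℤⁿ`. -/
def posDeg {n : ℕ} (K : AddSubgroup (Fin n → ℤ)) (β : Fin n → ℤ) (r : Fin n → ℤ) : Prop :=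
  ∃ a ∈ K, ∃ d : ℤ, 1 ≤ d ∧ r = a + d • β

/-- A representation of the loop Witt algebra `Wₙ ⊗ B`, given by operators
`D u r b` (for `D(u,r) ⊗ b`, where `D(u,r) = Σ uᵢ tʳ dᵢ`), bilinear in `u` and `b`,
subject to the Witt bracket relations. -/
structure WittRep (n : ℕ) (B : Type*) [CommRing B] [Algebra ℂ B]
    (V : Type*) [AddCommGroup V] [Module ℂ V] where
  D : (Fin n → ℂ) → (Fin n → ℤ) → B → Module.End ℂ V
  D_add_u : ∀ u u' r b, D (u + u') r b = D u r b + D u' r b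
  D_smul_u : ∀ (c : ℂ) u r b, D (c • u) r b = c • D u r b
  D_add_b : ∀ u r b b', D u r (b + b') = D u r b + D u r b'
  D_smul_b : ∀ (c : ℂ) u r b, D u r (c • b) = c • D u r b
  comm_DD : ∀ u r b v s b',
    ⁅D u r b, D v s b'⁆ = D (pairC u s • v - pairC v r • u) (r + s) (b * b')

namespace WittRep

variable {n : ℕ} {B : Type*} [CommRing B] [Algebra ℂ B]
  {V : Type*} [AddCommGroup V] [Module ℂ V]

/-- The weight space of weight `lam` with respect to the Cartan subalgebra `H = ⊕ ℂ dᵢ`. -/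
def weightSpace (ρ : WittRep n B V) (lam : Fin n → ℂ) : Submodule ℂ V where
  carrier := {x | ∀ u, ρ.D u 0 1 x = pairCC u lam • x}
  add_mem' := by
    intro a b ha hb u
    rw [map_add, ha u, hb u, smul_add]
  zero_mem' := by intro u; simp
  smul_mem' := by
    intro c a ha u
    rw [map_smul, ha u, smul_comm]

/-- A weight module: the sum of the weight spaces is everything. -/
def IsWeightModule (ρ : WittRep n B V) : Prop :=
  (⨆ lam : Fin n → ℂ, ρ.weightSpace lam) = ⊤

/-- Uniformly bounded weight spaces. -/
def UniformlyBounded (ρ : WittRep n B V) : Prop :=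
  ∃ N : ℕ, ∀ lam, Module.rank ℂ ↥(ρ.weightSpace lam) ≤ (N : Cardinal)

/-- A Harish-Chandra module: a weight module with finite dimensional weight spaces. -/
def HarishChandra (ρ : WittRep n B V) : Prop :=
  ρ.IsWeightModule ∧ ∀ lam, FiniteDimensional ℂ ↥(ρ.weightSpace lam)

/-- A submodule invariant under all the operators. -/
def Invariant (ρ : WittRep n B V) (U : Submodule ℂ V) : Prop :=
  ∀ u r b, ∀ x ∈ U, ρ.D u r b x ∈ U

/-- Irreducibility. -/
def IsIrreducible (ρ : WittRep n B V) : Prop :=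
  (∃ x : V, x ≠ 0) ∧ ∀ U : Submodule ℂ V, ρ.Invariant U → U = ⊥ ∨ U = ⊤

/-- A single point evaluation module. -/
def IsSinglePointEval (ρ : WittRep n B V) : Prop :=
  ∃ η : B →ₐ[ℂ] ℂ, ∀ u r b, ρ.D u r b = η b • ρ.D u r 1

/-- Nontriviality of the action. -/
def IsNontrivial (ρ : WittRep n B V) : Prop := ∃ u r b x, ρ.D u r b x ≠ 0

/-- `z` is a highest weight vector generating the module, with respect to the
triangular decomposition determined by `ℤⁿ = K ⊕ ℤβ`. -/
def IsHWVector (ρ : WittRep n B V) (K : AddSubgroup (Fin n → ℤ)) (β : Fin n → ℤ)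
    (z : V) : Prop :=
  z ≠ 0 ∧ (∃ lam, z ∈ ρ.weightSpace lam) ∧
  (∀ u r b, posDeg K β r → ρ.D u r b z = 0) ∧
  ∀ U : Submodule ℂ V, ρ.Invariant U → z ∈ U → U = ⊤

/-- A highest weight module. -/
def IsHighestWeight (ρ : WittRep n B V) : Prop :=
  ∃ (K : AddSubgroup (Fin n → ℤ)) (β : Fin n → ℤ),
    IsDirectSumDecomp K β ∧ ∃ z, ρ.IsHWVector K β z

end WittRep

/-- A representation of the loop extended Witt algebra `𝔏_{S,n}(B) = (Wₙ ⋉ (S ⊗ Aₙ)) ⊗ B`,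
given by operators `D u r b` (for `D(u,r) ⊗ b`) and `E s m b` (for `s ⊗ tᵐ ⊗ b`),
suitably multilinear, subject to the bracket relations of `𝔏_{S,n}(B)`. -/
structure ExtWittRep (n : ℕ) (S : Type*) [AddCommGroup S] [Module ℂ S]
    (B : Type*) [CommRing B] [Algebra ℂ B]
    (V : Type*) [AddCommGroup V] [Module ℂ V] where
  D : (Fin n → ℂ) → (Fin n → ℤ) → B → Module.End ℂ V
  E : S → (Fin n → ℤ) → B → Module.End ℂ V
  D_add_u : ∀ u u' r b, D (u + u') r b = D u r b + D u' r b
  D_smul_u : ∀ (c : ℂ) u r b, D (c • u) r b = c • D u r b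
  D_add_b : ∀ u r b b', D u r (b + b') = D u r b + D u r b'
  D_smul_b : ∀ (c : ℂ) u r b, D u r (c • b) = c • D u r b
  E_add_s : ∀ s s' m b, E (s + s') m b = E s m b + E s' m b
  E_smul_s : ∀ (c : ℂ) s m b, E (c • s) m b = c • E s m b
  E_add_b : ∀ s m b b', E s m (b + b') = E s m b + E s m b'
  E_smul_b : ∀ (c : ℂ) s m b, E s m (c • b) = c • E s m b
  comm_DD : ∀ u r b v s b',
    ⁅D u r b, D v s b'⁆ = D (pairC u s • v - pairC v r • u) (r + s) (b * b')
  comm_DE : ∀ u r b s m b', ⁅D u r b, E s m b'⁆ = pairC u m • E s (m + r) (b * b')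
  comm_EE : ∀ s m b s' m' b', ⁅E s m b, E s' m' b'⁆ = 0

namespace ExtWittRep

variable {n : ℕ} {S : Type*} [AddCommGroup S] [Module ℂ S]
  {B : Type*} [CommRing B] [Algebra ℂ B]
  {V : Type*} [AddCommGroup V] [Module ℂ V]

/-- The weight space of the weight given by `lam` on `H` and the linear functional `c`
on `S ≅ S ⊗ t⁰ (⊗ 1)`, with respect to the Cartan subalgebra `H ⊕ (S ⊗ t⁰) (⊗ 1)`. -/
def weightSpace (ρ : ExtWittRep n S B V) (lam : Fin n → ℂ) (c : S →ₗ[ℂ] ℂ) :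
    Submodule ℂ V where
  carrier := {x | (∀ u, ρ.D u 0 1 x = pairCC u lam • x) ∧ ∀ s, ρ.E s 0 1 x = c s • x}
  add_mem' := by
    intro a b ha hb
    refine ⟨fun u => ?_, fun s => ?_⟩
    · rw [map_add, ha.1 u, hb.1 u, smul_add]
    · rw [map_add, ha.2 s, hb.2 s, smul_add]
  zero_mem' := by exact ⟨fun u => by simp, fun s => by simp⟩
  smul_mem' := by
    intro t a ha
    refine ⟨fun u => ?_, fun s => ?_⟩
    · rw [map_smul, ha.1 u, smul_comm]
    · rw [map_smul, ha.2 s, smul_comm]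

/-- A weight module: the weight spaces span. -/
def IsWeightModule (ρ : ExtWittRep n S B V) : Prop :=
  (⨆ p : (Fin n → ℂ) × (S →ₗ[ℂ] ℂ), ρ.weightSpace p.1 p.2) = ⊤

/-- Uniformly bounded weight spaces. -/
def UniformlyBounded (ρ : ExtWittRep n S B V) : Prop :=
  ∃ N : ℕ, ∀ lam c, Module.rank ℂ ↥(ρ.weightSpace lam c) ≤ (N : Cardinal)

/-- Harish-Chandra: a weight module with finite dimensional weight spaces. -/
def HarishChandra (ρ : ExtWittRep n S B V) : Prop :=
  ρ.IsWeightModule ∧ ∀ lam c, FiniteDimensional ℂ ↥(ρ.weightSpace lam c)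

/-- Invariant submodule. -/
def Invariant (ρ : ExtWittRep n S B V) (U : Submodule ℂ V) : Prop :=
  (∀ u r b, ∀ x ∈ U, ρ.D u r b x ∈ U) ∧ (∀ s m b, ∀ x ∈ U, ρ.E s m b x ∈ U)

/-- Irreducibility. -/
def IsIrreducible (ρ : ExtWittRep n S B V) : Prop :=
  (∃ x : V, x ≠ 0) ∧ ∀ U : Submodule ℂ V, ρ.Invariant U → U = ⊥ ∨ U = ⊤

/-- A single point evaluation module. -/
def IsSinglePointEval (ρ : ExtWittRep n S B V) : Prop :=
  ∃ η : B →ₐ[ℂ] ℂ, (∀ u r b, ρ.D u r b = η b • ρ.D u r 1) ∧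
    ∀ s m b, ρ.E s m b = η b • ρ.E s m 1

/-- Single point generalised evaluation module: the action factors through
`𝔤 ⊗ B/𝔪ᵏ` for some maximal ideal `𝔪` and some `k`. -/
def IsGenEval (ρ : ExtWittRep n S B V) : Prop :=
  ∃ 𝔪 : Ideal B, 𝔪.IsMaximal ∧ ∃ k : ℕ, ∀ b ∈ 𝔪 ^ k,
    (∀ u r, ρ.D u r b = 0) ∧ ∀ s m, ρ.E s m b = 0

/-- Nontriviality of the action. -/
def IsNontrivial (ρ : ExtWittRep n S B V) : Prop :=
  (∃ u r b x, ρ.D u r b x ≠ 0) ∨ ∃ s m b x, ρ.E s m b x ≠ 0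

/-- The submodule of vectors on which the whole Lie algebra acts trivially. -/
def trivVectors (ρ : ExtWittRep n S B V) : Submodule ℂ V where
  carrier := {x | (∀ u r b, ρ.D u r b x = 0) ∧ ∀ s m b, ρ.E s m b x = 0}
  add_mem' := by
    intro a b ha hb
    exact ⟨fun u r c => by rw [map_add, ha.1 u r c, hb.1 u r c, add_zero],
      fun s m c => by rw [map_add, ha.2 s m c, hb.2 s m c, add_zero]⟩
  zero_mem' := ⟨fun u r c => by simp, fun s m c => by simp⟩
  smul_mem' := by
    intro t a ha
    exact ⟨fun u r c => by rw [map_smul, ha.1 u r c, smul_zero],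
      fun s m c => by rw [map_smul, ha.2 s m c, smul_zero]⟩

/-- Highest weight vector for the triangular decomposition determined by `ℤⁿ = K ⊕ ℤβ`,
generating the whole module. -/
def IsHWVector (ρ : ExtWittRep n S B V) (K : AddSubgroup (Fin n → ℤ)) (β : Fin n → ℤ)
    (z : V) : Prop :=
  z ≠ 0 ∧ (∃ lam c, z ∈ ρ.weightSpace lam c) ∧
  (∀ u r b, posDeg K β r → ρ.D u r b z = 0) ∧
  (∀ s m b, posDeg K β m → ρ.E s m b z = 0) ∧
  ∀ U : Submodule ℂ V, ρ.Invariant U → z ∈ U → U = ⊤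

/-- Highest weight module. -/
def IsHighestWeight (ρ : ExtWittRep n S B V) : Prop :=
  ∃ (K : AddSubgroup (Fin n → ℤ)) (β : Fin n → ℤ),
    IsDirectSumDecomp K β ∧ ∃ z, ρ.IsHWVector K β z

/-- Invariance under the degree-`K` part `(𝔏_{S,n}(B))_K`. -/
def InvariantK (ρ : ExtWittRep n S B V) (K : AddSubgroup (Fin n → ℤ))
    (U : Submodule ℂ V) : Prop :=
  (∀ u, ∀ r ∈ K, ∀ b, ∀ x ∈ U, ρ.D u r b x ∈ U) ∧
    ∀ s, ∀ m ∈ K, ∀ b, ∀ x ∈ U, ρ.E s m b x ∈ U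

/-- The highest weight space: the `(𝔏_{S,n}(B))_K`-submodule generated by `z`. -/
def hwSpace (ρ : ExtWittRep n S B V) (K : AddSubgroup (Fin n → ℤ)) (z : V) :
    Submodule ℂ V :=
  sInf {U : Submodule ℂ V | z ∈ U ∧ ρ.InvariantK K U}

end ExtWittRep

end LoopWitt

namespace LoopWitt

section Pairing

variable {n : ℕ}

lemma pairC_add_left (u v : Fin n → ℂ) (m : Fin n → ℤ) :
    pairC (u + v) m = pairC u m + pairC v m := by
  simp [pairC, add_mul, Finset.sum_add_distrib]

lemma pairC_add_right (u : Fin n → ℂ) (m m' : Fin n → ℤ) :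
    pairC u (m + m') = pairC u m + pairC u m' := by
  simp [pairC, mul_add, Finset.sum_add_distrib]

lemma pairC_neg_right (u : Fin n → ℂ) (m : Fin n → ℤ) : pairC u (-m) = -pairC u m := by
  simp [pairC]

lemma pairC_sub_right (u : Fin n → ℂ) (m m' : Fin n → ℤ) :
    pairC u (m - m') = pairC u m - pairC u m' := by
  rw [sub_eq_add_neg, pairC_add_right, pairC_neg_right, sub_eq_add_neg]

lemma pairC_nsmul_right (u : Fin n → ℂ) (k : ℕ) (m : Fin n → ℤ) :
    pairC u (k • m) = k * pairC u m := by
  simp only [pairC, Pi.smul_apply, Finset.mul_sum]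
  refine Finset.sum_congr rfl fun i _ => ?_
  push_cast [nsmul_eq_mul]
  ring

lemma pairC_zsmul_right (u : Fin n → ℂ) (k : ℤ) (m : Fin n → ℤ) :
    pairC u (k • m) = k * pairC u m := by
  simp only [pairC, Pi.smul_apply, Finset.mul_sum]
  refine Finset.sum_congr rfl fun i _ => ?_
  push_cast [zsmul_eq_mul]
  ring

@[simp] lemma pairC_zero_right (u : Fin n → ℂ) : pairC u 0 = 0 := by simp [pairC]

lemma pairC_single (i : Fin n) (m : Fin n → ℤ) : pairC (Pi.single i 1) m = m i := by
  simp [pairC, Pi.single_apply]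

lemma pairCC_single (i : Fin n) (lam : Fin n → ℂ) : pairCC (Pi.single i 1) lam = lam i := by
  simp [pairCC, Pi.single_apply]

/-- The complex weight `lam + m`. -/
def shiftWt (lam : Fin n → ℂ) (m : Fin n → ℤ) : Fin n → ℂ := fun i => lam i + m i

lemma pairCC_shiftWt (u lam : Fin n → ℂ) (m : Fin n → ℤ) :
    pairCC u (shiftWt lam m) = pairCC u lam + pairC u m := by
  simp [pairCC, pairC, shiftWt, mul_add, Finset.sum_add_distrib]

/-- Two nonzero additive functionals on a complex vector space are simultaneously nonzero
at some point. -/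
lemma exists_ne_zero_and_ne_zero {E : Type*} [AddCommGroup E] (p : E → Prop)
    (hp : ∀ x y, p x → p y → p (x + y)) (f g : E → ℂ)
    (hf : ∀ x y, f (x + y) = f x + f y) (hg : ∀ x y, g (x + y) = g x + g y)
    (h1 : ∃ x, p x ∧ f x ≠ 0) (h2 : ∃ x, p x ∧ g x ≠ 0) : ∃ x, p x ∧ f x ≠ 0 ∧ g x ≠ 0 := by
  obtain ⟨x, hpx, hx⟩ := h1
  obtain ⟨y, hpy, hy⟩ := h2
  by_cases hgx : g x = 0
  · by_cases hfy : f y = 0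
    · exact ⟨x + y, hp x y hpx hpy, by rw [hf, hfy, add_zero]; exact hx,
        by rw [hg, hgx, zero_add]; exact hy⟩
    · exact ⟨y, hpy, hfy, hy⟩
  · exact ⟨x, hpx, hx, hgx⟩

lemma exists_pairC_ne_zero {m : Fin n → ℤ} (hm : m ≠ 0) : ∃ u, pairC u m ≠ 0 := by
  obtain ⟨i, hi⟩ := Function.ne_iff.mp hm
  exact ⟨Pi.single i 1, by rw [pairC_single]; exact_mod_cast hi⟩

end Pairing

namespace ExtWittRep

variable {n : ℕ} {S : Type*} [AddCommGroup S] [Module ℂ S] {V : Type*} [AddCommGroup V]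
  [Module ℂ V] (ρ : ExtWittRep n S ℂ V)

lemma D_eq_smul (u : Fin n → ℂ) (r : Fin n → ℤ) (b : ℂ) : ρ.D u r b = b • ρ.D u r 1 := by
  rw [← ρ.D_smul_b, smul_eq_mul, mul_one]

lemma E_eq_smul (s : S) (m : Fin n → ℤ) (b : ℂ) : ρ.E s m b = b • ρ.E s m 1 := by
  rw [← ρ.E_smul_b, smul_eq_mul, mul_one]

lemma D_D (u : Fin n → ℂ) (r : Fin n → ℤ) (a : ℂ) (v : Fin n → ℂ) (s : Fin n → ℤ) (b : ℂ) (x : V) :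
    ρ.D u r a (ρ.D v s b x) = ρ.D v s b (ρ.D u r a x) +
      ρ.D (pairC u s • v - pairC v r • u) (r + s) (a * b) x := by
  rw [← ρ.comm_DD, Ring.lie_def]
  simp

lemma D_E (u : Fin n → ℂ) (r : Fin n → ℤ) (a : ℂ) (s : S) (m : Fin n → ℤ) (b : ℂ) (x : V) :
    ρ.D u r a (ρ.E s m b x) = ρ.E s m b (ρ.D u r a x) +
      pairC u m • ρ.E s (m + r) (a * b) x := by
  rw [← LinearMap.smul_apply, ← ρ.comm_DE, Ring.lie_def]
  simp

lemma E_D (u : Fin n → ℂ) (r : Fin n → ℤ) (a : ℂ) (s : S) (m : Fin n → ℤ) (b : ℂ) (x : V) :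
    ρ.E s m b (ρ.D u r a x) = ρ.D u r a (ρ.E s m b x) -
      pairC u m • ρ.E s (m + r) (a * b) x := by
  rw [D_E, add_sub_cancel_right]

lemma E_E (s : S) (m : Fin n → ℤ) (a : ℂ) (s' : S) (m' : Fin n → ℤ) (b : ℂ) (x : V) :
    ρ.E s m a (ρ.E s' m' b x) = ρ.E s' m' b (ρ.E s m a x) := by
  have := congrArg (fun f => f x) (ρ.comm_EE s m a s' m' b)
  rw [Ring.lie_def] at this
  simpa [sub_eq_zero] using this

/-- The operator `u ↦ D u r b x` as a linear map. -/
def DLin (r : Fin n → ℤ) (x : V) : (Fin n → ℂ) →ₗ[ℂ] V where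
  toFun u := ρ.D u r 1 x
  map_add' u v := by rw [ρ.D_add_u]; rfl
  map_smul' c u := by rw [ρ.D_smul_u]; rfl

/-- The operator `s ↦ E s m b x` as a linear map. -/
def ELin (m : Fin n → ℤ) (x : V) : S →ₗ[ℂ] V where
  toFun s := ρ.E s m 1 x
  map_add' s t := by rw [ρ.E_add_s]; rfl
  map_smul' c s := by rw [ρ.E_smul_s]; rfl

/-- The vector `x` is annihilated by the degree-`b` part of the Lie algebra. -/
def Kill (b : Fin n → ℤ) (x : V) : Prop :=
  (∀ u, ρ.D u b 1 x = 0) ∧ ∀ s, ρ.E s b 1 x = 0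

variable {ρ}

lemma Kill.D_eq_zero {b : Fin n → ℤ} {x : V} (h : ρ.Kill b x) (u : Fin n → ℂ) (c : ℂ) :
    ρ.D u b c x = 0 := by
  rw [D_eq_smul, LinearMap.smul_apply, h.1, smul_zero]

lemma Kill.E_eq_zero {b : Fin n → ℤ} {x : V} (h : ρ.Kill b x) (s : S) (c : ℂ) :
    ρ.E s b c x = 0 := by
  rw [E_eq_smul, LinearMap.smul_apply, h.2, smul_zero]

lemma kill_zero (b : Fin n → ℤ) : ρ.Kill b (0 : V) := ⟨fun _ => map_zero _, fun _ => map_zero _⟩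

lemma Kill.add_vec {b : Fin n → ℤ} {x y : V} (hx : ρ.Kill b x) (hy : ρ.Kill b y) :
    ρ.Kill b (x + y) :=
  ⟨fun u => by rw [map_add, hx.1, hy.1, add_zero], fun s => by rw [map_add, hx.2, hy.2, add_zero]⟩

lemma Kill.smul_vec {b : Fin n → ℤ} {x : V} (c : ℂ) (hx : ρ.Kill b x) : ρ.Kill b (c • x) :=
  ⟨fun u => by rw [map_smul, hx.1, smul_zero], fun s => by rw [map_smul, hx.2, smul_zero]⟩

lemma Kill.D_vec {b r : Fin n → ℤ} {x : V} (u : Fin n → ℂ) (c : ℂ) (hx : ρ.Kill b x)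
    (hx' : ρ.Kill (b + r) x) : ρ.Kill b (ρ.D u r c x) := by
  refine ⟨fun v => ?_, fun s => ?_⟩
  · rw [D_D, hx.1, map_zero, zero_add, hx'.D_eq_zero]
  · rw [E_D, hx.2, map_zero, zero_sub, hx'.E_eq_zero, smul_zero, neg_zero]

lemma Kill.E_vec {b r : Fin n → ℤ} {x : V} (s : S) (c : ℂ) (hx : ρ.Kill b x)
    (hx' : ρ.Kill (b + r) x) : ρ.Kill b (ρ.E s r c x) := by
  refine ⟨fun v => ?_, fun s' => ?_⟩
  · rw [D_E, hx.1, map_zero, zero_add, add_comm r b, hx'.E_eq_zero, smul_zero]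
  · rw [E_E, hx.2, map_zero]

/-- Because `[𝔏_b, 𝔏_b'] = 𝔏_{b + b'}` for `b ≠ b'`, the degrees annihilating a vector are closed
under addition of distinct elements. -/
lemma Kill.add {b b' : Fin n → ℤ} {x : V} (hb : ρ.Kill b x) (hb' : ρ.Kill b' x) (hne : b ≠ b') :
    ρ.Kill (b + b') x := by
  rcases eq_or_ne b' 0 with rfl | h0
  · rwa [add_zero]
  obtain ⟨p, -, hp, hp'⟩ := exists_ne_zero_and_ne_zero (fun _ => True) (fun _ _ _ _ => trivial)
    (fun u => pairC u b') (fun u => pairC u (b' - b)) (fun u v => pairC_add_left u v _)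
    (fun u v => pairC_add_left u v _)
    (by simpa using exists_pairC_ne_zero h0)
    (by simpa using exists_pairC_ne_zero (sub_ne_zero.mpr hne.symm))
  have key : ∀ w, ρ.DLin (b + b') x (pairC p b' • w - pairC w b • p) = 0 := by
    intro w
    have := ρ.D_D p b 1 w b' 1 x
    rw [hb'.1, hb.1, map_zero, map_zero, zero_add, mul_one] at this
    exact this.symm
  have hpN : ρ.DLin (b + b') x p = 0 := by
    have := key p
    rw [← sub_smul, ← pairC_sub_right, map_smul] at this
    exact (smul_eq_zero.mp this).resolve_left hp'
  refine ⟨fun w => ?_, fun s => ?_⟩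
  · have := key w
    rw [map_sub, map_smul, map_smul, hpN, smul_zero, sub_zero] at this
    exact (smul_eq_zero.mp this).resolve_left hp
  · have := ρ.D_E p b 1 s b' 1 x
    rw [hb'.2, hb.1, map_zero, map_zero, zero_add, mul_one, add_comm b' b] at this
    exact (smul_eq_zero.mp this.symm).resolve_left hp

variable (ρ)

/-- The graded piece of weight `lam + m`. -/
def grade (lam : Fin n → ℂ) (c : S →ₗ[ℂ] ℂ) (m : Fin n → ℤ) : Submodule ℂ V :=
  ρ.weightSpace (shiftWt lam m) c

variable {ρ} {lam : Fin n → ℂ} {c : S →ₗ[ℂ] ℂ}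

lemma D_mem_grade {m : Fin n → ℤ} {x : V} (hx : x ∈ ρ.grade lam c m) (u : Fin n → ℂ)
    (r : Fin n → ℤ) (b : ℂ) : ρ.D u r b x ∈ ρ.grade lam c (m + r) := by
  refine ⟨fun w => ?_, fun s => ?_⟩
  · rw [D_D, hx.1, map_smul, zero_add, one_mul, pairC_zero_right, zero_smul, sub_zero, ρ.D_smul_u,
      LinearMap.smul_apply, ← add_smul, pairCC_shiftWt, pairCC_shiftWt, pairC_add_right, add_assoc]
  · rw [E_D, hx.2, map_smul, pairC_zero_right, zero_smul, sub_zero]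

lemma E_mem_grade {m : Fin n → ℤ} {x : V} (hx : x ∈ ρ.grade lam c m) (s : S)
    (r : Fin n → ℤ) (b : ℂ) : ρ.E s r b x ∈ ρ.grade lam c (m + r) := by
  refine ⟨fun w => ?_, fun s' => ?_⟩
  · rw [D_E, hx.1, map_smul, add_zero, one_mul, ← add_smul, pairCC_shiftWt, pairCC_shiftWt,
      pairC_add_right, add_assoc]
  · rw [E_E, hx.2, map_smul]

/-- If every graded piece indexed by `A` is sent into `U` by a family of operators, so is their
supremum. -/
lemma mem_of_mem_iSup_grade {A : Set (Fin n → ℤ)} {U : Submodule ℂ V} {f : Module.End ℂ V}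
    (h : ∀ m ∈ A, ∀ x ∈ ρ.grade lam c m, f x ∈ U) {x : V} (hx : x ∈ ⨆ m ∈ A, ρ.grade lam c m) :
    f x ∈ U := by
  have : (⨆ m ∈ A, ρ.grade lam c m) ≤ U.comap f := iSup₂_le fun m hm y hy => h m hm y hy
  exact this hx

variable (ρ) in
lemma iSupIndep_weightSpace :
    iSupIndep fun p : (Fin n → ℂ) × (S →ₗ[ℂ] ℂ) => ρ.weightSpace p.1 p.2 := by
  let f : (Fin n → ℂ) ⊕ S → Module.End ℂ V := Sum.elim (fun u => ρ.D u 0 1) (fun s => ρ.E s 0 1)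
  have hcomm : ∀ i j, Commute (f i) (f j) := by
    have hDE : ∀ u s, Commute (ρ.D u 0 1) (ρ.E s 0 1) := fun u s => by
      ext x
      simp only [Module.End.mul_apply]
      rw [D_E, pairC_zero_right, zero_smul, add_zero]
    rintro (u | s) (v | t)
    · ext x
      simp only [f, Sum.elim_inl, Module.End.mul_apply]
      rw [D_D, pairC_zero_right, pairC_zero_right, zero_smul, zero_smul, sub_zero,
        ← zero_smul ℂ (0 : Fin n → ℂ), ρ.D_smul_u, zero_smul, LinearMap.zero_apply, add_zero]
    · exact hDE u t
    · exact (hDE v s).symm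
    · ext x
      simp only [f, Sum.elim_inr, Module.End.mul_apply]
      rw [E_E]
  have hind := Module.End.independent_iInf_maxGenEigenspace_of_forall_mapsTo f
    fun i j φ => Module.End.mapsTo_maxGenEigenspace_of_comm (hcomm j i) φ
  let χ : (Fin n → ℂ) × (S →ₗ[ℂ] ℂ) → (Fin n → ℂ) ⊕ S → ℂ :=
    fun p => Sum.elim (fun u => pairCC u p.1) p.2
  have hχ : Function.Injective χ := by
    rintro ⟨l, c⟩ ⟨l', c'⟩ h
    refine Prod.ext (funext fun i => ?_) (LinearMap.ext fun s => congrFun h (Sum.inr s))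
    have := congrFun h (Sum.inl (Pi.single i 1))
    simpa only [χ, Sum.elim_inl, pairCC_single] using this
  refine (hind.comp hχ).mono fun p x hx => ?_
  simp only [Function.comp, Submodule.mem_iInf]
  have hle := fun i => Module.End.genEigenspace_le_maximal (f i) (χ p i) 1
  rintro (u | s)
  · exact hle _ (Module.End.mem_eigenspace_iff.mpr (hx.1 u))
  · exact hle _ (Module.End.mem_eigenspace_iff.mpr (hx.2 s))

lemma iSupIndep_grade : iSupIndep (ρ.grade lam c) := by
  refine ρ.iSupIndep_weightSpace.comp (f := fun m => (shiftWt lam m, c)) fun m m' h => ?_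
  ext i
  have := congrFun (congrArg Prod.fst h) i
  simpa [shiftWt] using this

lemma iSup_grade_eq_top (hirr : ρ.IsIrreducible) {m : Fin n → ℤ} (hm : ρ.grade lam c m ≠ ⊥) :
    ⨆ m, ρ.grade lam c m = ⊤ := by
  refine (hirr.2 _ ⟨fun u r b x hx => ?_, fun s r b x hx => ?_⟩).resolve_left fun h => hm ?_
  · have : (⨆ m, ρ.grade lam c m) ≤ (⨆ m, ρ.grade lam c m).comap (ρ.D u r b) :=
      iSup_le fun m y hy => (le_iSup (ρ.grade lam c) (m + r)) (D_mem_grade hy u r b)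
    exact this hx
  · have : (⨆ m, ρ.grade lam c m) ≤ (⨆ m, ρ.grade lam c m).comap (ρ.E s r b) :=
      iSup_le fun m y hy => (le_iSup (ρ.grade lam c) (m + r)) (E_mem_grade hy s r b)
    exact this hx
  · exact eq_bot_iff.mpr (h ▸ le_iSup (ρ.grade lam c) m)

/-- An irreducible weight module is supported on a single coset of `ℤⁿ`. -/
lemma exists_grade_ne_bot (hw : ρ.IsWeightModule) (hirr : ρ.IsIrreducible) :
    ∃ lam c, ρ.grade lam c 0 ≠ ⊥ := by
  by_contra! h
  obtain ⟨x, hx⟩ := hirr.1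
  have hbot : (⨆ p : (Fin n → ℂ) × (S →ₗ[ℂ] ℂ), ρ.weightSpace p.1 p.2) = ⊥ := by
    refine iSup_eq_bot.mpr fun p => ?_
    have := h p.1 p.2
    rwa [grade, show shiftWt p.1 0 = p.1 by ext i; simp [shiftWt]] at this
  rw [hw] at hbot
  exact hx ((Submodule.mem_bot ℂ).mp (hbot ▸ Submodule.mem_top))

lemma exists_lt_finrank_grade (hhc : ρ.HarishChandra) (hnub : ¬ρ.UniformlyBounded)
    (htop : ⨆ m, ρ.grade lam c m = ⊤) (N : ℕ) : ∃ m, N < Module.finrank ℂ (ρ.grade lam c m) := by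
  by_contra! h
  refine hnub ⟨N, fun l d => ?_⟩
  have := hhc.2 l d
  by_cases hp : ∃ m, (shiftWt lam m, c) = (l, d)
  · obtain ⟨m, hm⟩ := hp
    obtain ⟨rfl, rfl⟩ := Prod.ext_iff.mp hm
    rw [← Module.finrank_eq_rank]
    exact_mod_cast h m
  · have hdis := ρ.iSupIndep_weightSpace (l, d)
    have hle : (⨆ m, ρ.grade lam c m) ≤ ⨆ (q) (_ : q ≠ (l, d)), ρ.weightSpace q.1 q.2 :=
      iSup_le fun m => le_iSup₂_of_le (shiftWt lam m, c) (fun h => hp ⟨m, h⟩) le_rfl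
    rw [htop, top_le_iff] at hle
    rw [hle, disjoint_top] at hdis
    have hbot : ρ.weightSpace l d = ⊥ := hdis
    rw [hbot, rank_bot]
    exact zero_le

end ExtWittRep

end LoopWitt

namespace LoopWitt

/-- The strictly positive cone of a total archimedean preorder on an abelian group. -/
structure IsArchCone {G : Type*} [AddCommGroup G] (O : Set G) : Prop where
  zero_notMem : (0 : G) ∉ O
  add_mem : ∀ {r r'}, r ∈ O → r' ∈ O → r + r' ∈ O
  add_notMem : ∀ {r r'}, r ∉ O → r' ∉ O → r + r' ∉ O
  exists_nsmul_add_mem : ∀ {r}, r ∈ O → ∀ a, ∃ k : ℕ, k • r + a ∈ O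

namespace IsArchCone

variable {G : Type*} [AddCommGroup G] {O : Set G}

lemma neg_notMem (hO : IsArchCone O) {r : G} (hr : r ∈ O) : -r ∉ O := fun h =>
  hO.zero_notMem (by simpa using hO.add_mem hr h)

lemma nsmul_mem (hO : IsArchCone O) {r : G} (hr : r ∈ O) {k : ℕ} (hk : 1 ≤ k) : k • r ∈ O := by
  induction k, hk using Nat.le_induction with
  | base => rwa [one_nsmul]
  | succ k _ ih => rw [succ_nsmul]; exact hO.add_mem ih hr

lemma add_nsmul_mem (hO : IsArchCone O) {r x : G} (hx : x ∈ O) (hr : r ∈ O) (k : ℕ) : x + k • r ∈ O := by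
  rcases Nat.eq_zero_or_pos k with rfl | hk
  · rwa [zero_nsmul, add_zero]
  · exact hO.add_mem hx (hO.nsmul_mem hr hk)

lemma zsmul_mem_iff (hO : IsArchCone O) {r : G} (hr : r ∈ O) {z : ℤ} : z • r ∈ O ↔ 1 ≤ z := by
  have hpos : ∀ z : ℤ, 1 ≤ z → z • r ∈ O := fun z hz => by
    lift z to ℕ using by omega
    rw [natCast_zsmul]
    exact hO.nsmul_mem hr (by omega)
  refine ⟨fun h => ?_, hpos z⟩
  by_contra! hz
  rcases (show z = 0 ∨ 1 ≤ -z by omega) with rfl | hz'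
  · exact hO.zero_notMem (by simpa using h)
  · exact hO.neg_notMem (hpos _ hz') (by simpa using h)

/-- The elements that are neither positive nor negative. -/
def units (hO : IsArchCone O) : AddSubgroup G where
  carrier := {a | a ∉ O ∧ -a ∉ O}
  zero_mem' := ⟨hO.zero_notMem, by rw [neg_zero]; exact hO.zero_notMem⟩
  add_mem' := fun ha hb => ⟨hO.add_notMem ha.1 hb.1, by
    rw [neg_add]; exact hO.add_notMem ha.2 hb.2⟩
  neg_mem' := fun ha => ⟨ha.2, by rw [neg_neg]; exact ha.1⟩

lemma add_mem_of_notMem (hO : IsArchCone O) {r a : G} (hr : r ∈ O) (ha : -a ∉ O) : r + a ∈ O := by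
  by_contra h
  exact hO.add_notMem h ha (by rwa [add_neg_cancel_right])

lemma exists_eq_add_zsmul (hO : IsArchCone O) {β : G} (hβ : β ∈ O)
    (hmin : ∀ r ∈ O, β - r ∉ O) (m : G) :
    ∃ a ∈ hO.units, ∃ d : ℤ, m = a + d • β := by
  obtain ⟨K, hK⟩ := hO.exists_nsmul_add_mem hβ m
  obtain ⟨L, hL⟩ := hO.exists_nsmul_add_mem hβ (-m)
  obtain ⟨d, hd, hleast⟩ := Int.exists_least_of_bdd (P := fun d : ℤ => m - d • β ∉ O)
    ⟨-K, fun z hz => by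
      by_contra! hlt
      have := hO.add_nsmul_mem hK hβ (-K - z).toNat
      refine hz ?_
      convert this using 1
      rw [← natCast_zsmul, ← natCast_zsmul, Int.toNat_of_nonneg (by omega)]
      module⟩
    ⟨L, fun h => hO.neg_notMem hL (by convert h using 1; rw [natCast_zsmul]; abel)⟩
  have hd' : m - (d - 1) • β ∈ O := by
    by_contra h
    have := hleast _ h
    omega
  refine ⟨m - d • β, ⟨hd, fun h => hmin _ hd' ?_⟩, d, by abel⟩
  convert h using 1
  module

lemma exists_lt_lt (hO : IsArchCone O) (hdense : ∀ β ∈ O, ∃ r ∈ O, β - r ∈ O)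
    {x y : G} (hx : x ∈ O) (hy : y ∈ O) : ∃ e ∈ O, x - e ∈ O ∧ y - e ∈ O := by
  by_cases hxy : x - y ∈ O
  · obtain ⟨e, he, hye⟩ := hdense y hy
    exact ⟨e, he, by simpa using hO.add_mem hxy hye, hye⟩
  · obtain ⟨e, he, hxe⟩ := hdense x hx
    refine ⟨e, he, hxe, ?_⟩
    have := hO.add_mem_of_notMem hxe (a := y - x) (by rwa [neg_sub])
    convert this using 1
    abel

lemma exists_nsmul_lt (hO : IsArchCone O) (hdense : ∀ β ∈ O, ∃ r ∈ O, β - r ∈ O)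
    {x : G} (hx : x ∈ O) (N : ℕ) : ∃ e ∈ O, x - N • e ∈ O := by
  induction N with
  | zero => exact ⟨x, hx, by simpa using hx⟩
  | succ N ih =>
    obtain ⟨e, he, hxe⟩ := ih
    obtain ⟨e', he', h1, h2⟩ := hO.exists_lt_lt hdense he hxe
    refine ⟨e', he', ?_⟩
    have := hO.add_nsmul_mem h2 h1 N
    convert this using 1
    simp only [smul_sub, succ_nsmul]
    abel

end IsArchCone

/-- Small elements of a dense archimedean cone avoid a prescribed complex line. -/
lemma IsArchCone.exists_avoid_line {n : ℕ} {O : Set (Fin n → ℤ)} (hO : IsArchCone O)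
    (hne : O.Nonempty) {η : Fin n → ℂ} (hη : η ≠ 0) :
    ∃ r ∈ O, ∃ g : ℕ, ∀ e ∈ O, r - g • e ∈ O → ∃ i j, (e i : ℂ) * η j ≠ e j * η i := by
  by_cases h : ∃ r ∈ O, ∀ i j, (r i : ℂ) * η j = r j * η i
  · obtain ⟨r, hr, hrη⟩ := h
    have hr0 : r ≠ 0 := fun h => hO.zero_notMem (h ▸ hr)
    obtain ⟨i, hi⟩ := Function.ne_iff.mp hr0
    obtain ⟨l, hl⟩ := Function.ne_iff.mp hη
    refine ⟨r, hr, (r i).natAbs, fun e he hre => ?_⟩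
    by_contra! heη
    have hpar : ∀ j, r i * e j = e i * r j := by
      intro j
      have h1 : ((r i : ℂ) * e j) * η l = (e i * r j) * η l := by
        linear_combination (r i : ℂ) * heη j l + (e l : ℂ) * hrη i j - (r j : ℂ) * heη i l
      exact_mod_cast mul_right_cancel₀ hl h1
    obtain ⟨p, hp⟩ : ∃ p : ℤ, (r i).natAbs • e = p • r := by
      rcases Int.natAbs_eq (r i) with h | h
      · refine ⟨e i, funext fun j => ?_⟩
        simp only [Pi.smul_apply, nsmul_eq_mul, smul_eq_mul]
        rw [← hpar j]; congr 1; exact h.symm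
      · refine ⟨-e i, funext fun j => ?_⟩
        simp only [Pi.smul_apply, nsmul_eq_mul, smul_eq_mul]
        have : (((r i).natAbs : ℕ) : ℤ) = -r i := by omega
        rw [neg_mul, ← hpar j, ← neg_mul]; congr 1
    have h1 : p • r ∈ O := hp ▸ hO.nsmul_mem he (Int.natAbs_pos.mpr hi)
    have h2 : (1 - p) • r ∈ O := by
      rw [sub_smul, one_smul, ← hp]; exact hre
    rw [hO.zsmul_mem_iff hr] at h1 h2
    omega
  · push Not at h
    obtain ⟨r, hr⟩ := hne
    exact ⟨r, hr, 0, fun e he _ => h e he⟩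

/-- A family that is triangular with respect to some linear maps is linearly independent. -/
lemma linearIndependent_of_triangular {ι W W' : Type*} [LinearOrder ι] [AddCommGroup W]
    [Module ℂ W] [AddCommGroup W'] [Module ℂ W'] (x : ι → W) (f : ι → W →ₗ[ℂ] W')
    (h0 : ∀ i m, i < m → f m (x i) = 0) (h1 : ∀ m, f m (x m) ≠ 0) : LinearIndependent ℂ x := by
  rw [linearIndependent_iff']
  intro s g hg
  by_contra! hcon
  have hne : (s.filter fun i => g i ≠ 0).Nonempty := by
    obtain ⟨i, hi, hgi⟩ := hcon
    exact ⟨i, Finset.mem_filter.mpr ⟨hi, hgi⟩⟩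
  obtain ⟨m, hm, hmax⟩ := Finset.exists_max_image _ id hne
  rw [Finset.mem_filter] at hm
  have := congrArg (f m) hg
  rw [map_sum, map_zero, Finset.sum_eq_single_of_mem m hm.1, map_smul] at this
  · exact (smul_ne_zero hm.2 (h1 m)) this
  · intro i hi him
    rw [map_smul]
    by_cases hgi : g i = 0
    · rw [hgi, zero_smul]
    · rw [h0 i m (lt_of_le_of_ne (hmax i (Finset.mem_filter.mpr ⟨hi, hgi⟩)) him), smul_zero]

end LoopWitt

namespace LoopWitt

section DistinctSums

/-! Sets of degrees closed under sums of distinct elements. -/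

variable {n : ℕ} {Z : Set (Fin n → ℤ)}

lemma eventually_add_mem (hZ : ∀ b ∈ Z, ∀ b' ∈ Z, b ≠ b' → b + b' ∈ Z) {p a a' : Fin n → ℤ}
    (hp : p ≠ 0) (ha : ∃ K : ℕ, ∀ k ≥ K, k • p + a ∈ Z) (ha' : ∃ K : ℕ, ∀ k ≥ K, k • p + a' ∈ Z) :
    ∃ K : ℕ, ∀ k ≥ K, k • p + (a + a') ∈ Z := by
  obtain ⟨K, hK⟩ := ha
  obtain ⟨K', hK'⟩ := ha'
  refine ⟨K + K' + 1, fun k hk => ?_⟩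
  obtain ⟨l, rfl⟩ := Nat.exists_eq_add_of_le hk
  by_cases h : K • p + a = (K' + l + 1) • p + a'
  · have h' : (K + 1) • p + a ≠ (K' + l) • p + a' := by
      intro h'
      refine hp (self_eq_neg.mp ?_)
      have e1 : (K + 1) • p + a = p + (K • p + a) := by rw [succ_nsmul]; abel
      have e2 : (K' + l + 1) • p + a' = p + ((K' + l) • p + a') := by rw [succ_nsmul]; abel
      rw [e1, h, e2, ← add_assoc] at h'
      exact eq_neg_of_add_eq_zero_left (add_eq_right.mp h')
    convert hZ _ (hK (K + 1) (by omega)) _ (hK' (K' + l) (by omega)) h' using 1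
    simp only [add_nsmul, one_nsmul]
    abel
  · convert hZ _ (hK K le_rfl) _ (hK' (K' + l + 1) (by omega)) h using 1
    simp only [add_nsmul, one_nsmul]
    abel

lemma eventually_mem_of_basis (hn : 0 < n) (hZ : ∀ b ∈ Z, ∀ b' ∈ Z, b ≠ b' → b + b' ∈ Z)
    {p : Fin n → ℤ} (hp0 : p ≠ 0) (hp : p ∈ Z)
    (hpe : ∀ i, ∀ z : ℤ, z = 1 ∨ z = -1 → p ≠ Pi.single i z ∧ p + Pi.single i z ∈ Z)
    (a : Fin n → ℤ) : ∃ K : ℕ, ∀ k ≥ K, k • p + a ∈ Z := by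
  have hunit : ∀ i, ∀ z : ℤ, z = 1 ∨ z = -1 → ∃ K : ℕ, ∀ k ≥ K, k • p + Pi.single i z ∈ Z := by
    intro i z hz
    refine ⟨1, fun k hk => ?_⟩
    induction k, hk using Nat.le_induction with
    | base => rw [one_nsmul]; exact (hpe i z hz).2
    | succ k hk ih =>
      have hne : k • p + Pi.single i z ≠ p := by
        intro h
        obtain ⟨l, rfl⟩ := Nat.exists_eq_add_of_le hk
        rw [add_comm 1 l, succ_nsmul, add_right_comm, add_eq_right] at h
        have hi : (l : ℤ) * p i + z = 0 := by simpa using congrFun h i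
        have hl : (l : ℤ) = 1 := by
          have hdvd : (l : ℤ) ∣ 1 := by
            rcases hz with rfl | rfl
            · exact ⟨-p i, by linarith⟩
            · exact ⟨p i, by linarith⟩
          exact Int.eq_one_of_dvd_one (Int.natCast_nonneg l) hdvd
        have hl' : l = 1 := by exact_mod_cast hl
        rw [hl', one_nsmul] at h
        refine (hpe i (-z) (by omega)).1 ?_
        rw [Pi.single_neg]
        exact eq_neg_of_add_eq_zero_left h
      convert hZ _ ih _ hp hne using 1
      rw [succ_nsmul]; abel
  have hzero : ∃ K : ℕ, ∀ k ≥ K, k • p + (0 : Fin n → ℤ) ∈ Z := by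
    have := eventually_add_mem hZ hp0 (hunit ⟨0, hn⟩ 1 (Or.inl rfl)) (hunit ⟨0, hn⟩ (-1) (Or.inr rfl))
    rwa [← Pi.single_add, add_neg_cancel, Pi.single_zero] at this
  let X : AddSubmonoid (Fin n → ℤ) :=
    { carrier := {a | ∃ K : ℕ, ∀ k ≥ K, k • p + a ∈ Z}
      add_mem' := eventually_add_mem hZ hp0
      zero_mem' := hzero }
  change a ∈ X
  rw [← Finset.univ_sum_single a]
  refine X.sum_mem fun i _ => ?_
  rcases le_total 0 (a i) with h | h
  · have : Pi.single i (a i) = (a i).natAbs • (Pi.single i 1 : Fin n → ℤ) := by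
      rw [← Pi.single_smul]; simp [abs_of_nonneg h]
    rw [this]
    exact X.nsmul_mem (hunit i 1 (Or.inl rfl)) _
  · have : Pi.single i (a i) = (a i).natAbs • (Pi.single i (-1) : Fin n → ℤ) := by
      rw [← Pi.single_smul]; simp [abs_of_nonpos h]
    rw [this]
    exact X.nsmul_mem (hunit i (-1) (Or.inr rfl)) _

/-- In rank at least two, every element is killed by a nonzero endomorphism. -/
lemma exists_addMonoidHom_eq_zero (hn : 2 ≤ n) (α : Fin n → ℤ) :
    ∃ ω : (Fin n → ℤ) →+ (Fin n → ℤ), ω α = 0 ∧ ∃ e, ω e ≠ 0 := by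
  rcases eq_or_ne α 0 with rfl | h
  · refine ⟨AddMonoidHom.id _, rfl, Pi.single ⟨0, by omega⟩ 1, ?_⟩
    simp
  · obtain ⟨i, hi⟩ := Function.ne_iff.mp h
    have : Nontrivial (Fin n) := Fin.nontrivial_iff_two_le.mpr hn
    obtain ⟨j, hj⟩ := exists_ne i
    refine ⟨⟨⟨fun x => α i • x - x i • α, by simp⟩, fun x y => ?_⟩, sub_self _, Pi.single j 1, ?_⟩
    · simp only [Pi.add_apply, add_smul, smul_add]; abel
    · intro h0
      have := congrFun h0 j
      simp [hj.symm] at this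
      exact hi this

lemma eventually_mem_add (hn : 2 ≤ n) (hZ : ∀ b ∈ Z, ∀ b' ∈ Z, b ≠ b' → b + b' ∈ Z)
    {r α : Fin n → ℤ} (hr : ∀ a, ∃ K : ℕ, ∀ k ≥ K, k • r + a ∈ Z) (hα : α ∈ Z)
    (a : Fin n → ℤ) : ∃ K : ℕ, ∀ k ≥ K, k • (r + α) + a ∈ Z := by
  obtain ⟨ω, hω, e, he⟩ := exists_addMonoidHom_eq_zero hn α
  have hline : ∀ b ∈ Z, ω b ≠ 0 → ∀ k : ℕ, b + k • α ∈ Z := by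
    intro b hb hωb k
    induction k with
    | zero => simpa using hb
    | succ k ih =>
      rw [succ_nsmul, ← add_assoc]
      refine hZ _ ih _ hα fun h => hωb ?_
      simpa [-nsmul_eq_mul, hω] using congrArg ω h
  have hev : ∀ a, (∃ K : ℕ, ∀ k ≥ K, ω (k • r + a) ≠ 0) →
      ∃ K : ℕ, ∀ k ≥ K, k • (r + α) + a ∈ Z := by
    rintro a ⟨K, hK⟩
    obtain ⟨K', hK'⟩ := hr a
    refine ⟨K + K', fun k hk => ?_⟩
    convert hline _ (hK' k (by omega)) (hK k (by omega)) k using 1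
    rw [nsmul_add]; abel
  by_cases hωr : ω r = 0
  · by_cases hωa : ω a = 0
    · obtain ⟨K, hK⟩ := hev e ⟨0, fun k _ => by simpa [-nsmul_eq_mul, hωr] using he⟩
      obtain ⟨K', hK'⟩ := hev (a - e) ⟨0, fun k _ => by simpa [-nsmul_eq_mul, hωr, hωa] using he⟩
      refine ⟨K + K', fun k hk => ?_⟩
      obtain ⟨l, rfl⟩ := Nat.exists_eq_add_of_le hk
      convert hZ _ (hK K le_rfl) _ (hK' (K' + l) (by omega)) ?_ using 1
      · simp only [add_nsmul]; abel
      · intro h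
        have := congrArg ω h
        simp only [map_add, map_nsmul, hωr, hω, map_sub, hωa] at this
        simp only [add_zero, nsmul_zero, zero_add, zero_sub] at this
        exact he (self_eq_neg.mp this)
    · exact hev a ⟨0, fun k _ => by simpa [-nsmul_eq_mul, hωr] using hωa⟩
  · refine hev a ?_
    by_cases h : ∃ k : ℕ, ω (k • r + a) = 0
    · obtain ⟨k₀, hk₀⟩ := h
      refine ⟨k₀ + 1, fun k hk h0 => hωr ?_⟩
      obtain ⟨l, rfl⟩ := Nat.exists_eq_add_of_le hk
      have : (k₀ + 1 + l) • r + a = (l + 1) • r + (k₀ • r + a) := by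
        simp only [add_nsmul, one_nsmul]; abel
      rw [this, map_add, hk₀, add_zero, map_nsmul] at h0
      exact (smul_eq_zero.mp h0).resolve_left (by omega)
    · push Not at h
      exact ⟨0, fun k _ => h k⟩

end DistinctSums

end LoopWitt

namespace LoopWitt

namespace ExtWittRep

variable {n : ℕ} {S : Type*} [AddCommGroup S] [Module ℂ S] {V : Type*} [AddCommGroup V]
  [Module ℂ V] (ρ : ExtWittRep n S ℂ V)

/-- The degrees `r` such that every vector is annihilated by `𝔏_{kr + a}` for all large `k`. -/
def nilCone : Set (Fin n → ℤ) := {r | ∀ v a, ∃ K : ℕ, ∀ k ≥ K, ρ.Kill (k • r + a) v}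

variable {ρ}

lemma mem_nilCone_of_ne_zero (hirr : ρ.IsIrreducible) {r : Fin n → ℤ} {v : V} (hv : v ≠ 0)
    (h : ∀ a, ∃ K : ℕ, ∀ k ≥ K, ρ.Kill (k • r + a) v) : r ∈ ρ.nilCone := by
  let U : Submodule ℂ V :=
    { carrier := {v | ∀ a, ∃ K : ℕ, ∀ k ≥ K, ρ.Kill (k • r + a) v}
      add_mem' := fun {x y} hx hy a => by
        obtain ⟨K, hK⟩ := hx a
        obtain ⟨K', hK'⟩ := hy a
        exact ⟨K + K', fun k hk => (hK k (by omega)).add_vec (hK' k (by omega))⟩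
      zero_mem' := fun a => ⟨0, fun k _ => kill_zero _⟩
      smul_mem' := fun t x hx a => by
        obtain ⟨K, hK⟩ := hx a
        exact ⟨K, fun k hk => (hK k hk).smul_vec t⟩ }
  have hU : U = ⊤ := by
    refine (hirr.2 U ⟨fun u s b x hx a => ?_, fun t s b x hx a => ?_⟩).resolve_left fun h0 => hv ?_
    · obtain ⟨K, hK⟩ := hx a
      obtain ⟨K', hK'⟩ := hx (a + s)
      refine ⟨K + K', fun k hk => (hK k (by omega)).D_vec u b ?_⟩
      rw [add_assoc]
      exact hK' k (by omega)
    · obtain ⟨K, hK⟩ := hx a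
      obtain ⟨K', hK'⟩ := hx (a + s)
      refine ⟨K + K', fun k hk => (hK k (by omega)).E_vec t b ?_⟩
      rw [add_assoc]
      exact hK' k (by omega)
    · have : v ∈ U := h
      rwa [h0, Submodule.mem_bot] at this
  intro w
  exact (hU ▸ Submodule.mem_top : w ∈ U)

lemma zero_notMem_nilCone (hirr : ρ.IsIrreducible) (hnub : ¬ρ.UniformlyBounded) :
    (0 : Fin n → ℤ) ∉ ρ.nilCone := by
  intro h0
  have hk : ∀ a v, ρ.Kill a v := fun a v => by
    obtain ⟨K, hK⟩ := h0 v a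
    simpa using hK K le_rfl
  obtain ⟨x, hx⟩ := hirr.1
  have htop : Submodule.span ℂ {x} = ⊤ := by
    refine (hirr.2 _ ⟨fun u r b y _ => ?_, fun s r b y _ => ?_⟩).resolve_left ?_
    · rw [(hk r y).D_eq_zero]; exact zero_mem _
    · rw [(hk r y).E_eq_zero]; exact zero_mem _
    · rwa [Submodule.span_singleton_eq_bot]
  refine hnub ⟨1, fun lam c => (Submodule.rank_le _).trans ?_⟩
  rw [← rank_top, ← htop]
  exact (rank_span_le _).trans (by simp)

lemma kill_distinct (v : V) : ∀ b ∈ {b | ρ.Kill b v}, ∀ b' ∈ {b | ρ.Kill b v}, b ≠ b' →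
    b + b' ∈ {b | ρ.Kill b v} := fun _ hb _ hb' h => Kill.add hb hb' h

lemma nilCone_add_of_kill (hn : 2 ≤ n) (hirr : ρ.IsIrreducible) {r α : Fin n → ℤ}
    (hr : r ∈ ρ.nilCone) {v : V} (hv : v ≠ 0) (hα : ρ.Kill α v) : r + α ∈ ρ.nilCone :=
  mem_nilCone_of_ne_zero hirr hv (eventually_mem_add hn (kill_distinct v) (hr v) hα)

lemma not_kill_neg (hn : 2 ≤ n) (hirr : ρ.IsIrreducible) (hnub : ¬ρ.UniformlyBounded)
    {r : Fin n → ℤ} (hr : r ∈ ρ.nilCone) {v : V} (hv : v ≠ 0) : ¬ρ.Kill (-r) v := fun h =>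
  zero_notMem_nilCone hirr hnub (add_neg_cancel r ▸ nilCone_add_of_kill hn hirr hr hv h)

lemma mem_nilCone_of_three_nsmul_mem {α : Fin n → ℤ} (h : 3 • α ∈ ρ.nilCone) :
    α ∈ ρ.nilCone := by
  intro v a
  choose K hK using fun j : ℕ => h v (j • α + a)
  refine ⟨3 * (K 0 + K 1 + K 2) + 3, fun k hk => ?_⟩
  have hle : K (k % 3) ≤ K 0 + K 1 + K 2 := by
    have := Nat.mod_lt k (show 0 < 3 by norm_num)
    interval_cases k % 3 <;> omega
  convert hK (k % 3) (k / 3) (by omega) using 1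
  rw [← add_assoc, ← mul_nsmul, ← add_nsmul, Nat.div_add_mod]

lemma nilCone_add_mem (hn : 0 < n) {r r' : Fin n → ℤ} (hr : r ∈ ρ.nilCone)
    (hr' : r' ∈ ρ.nilCone) : r + r' ∈ ρ.nilCone := by
  intro v a
  let e : Fin n → ℤ := Pi.single ⟨0, hn⟩ 1
  have he : e ≠ 0 := by simp [e]
  obtain ⟨K₁, h₁⟩ := hr v a
  obtain ⟨K₂, h₂⟩ := hr' v 0
  obtain ⟨K₃, h₃⟩ := hr v (a - e)
  obtain ⟨K₄, h₄⟩ := hr' v e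
  refine ⟨K₁ + K₂ + K₃ + K₄, fun k hk => ?_⟩
  by_cases h : k • r + a = k • r' + 0
  · convert (h₃ k (by omega)).add (h₄ k (by omega)) ?_ using 1
    · rw [nsmul_add]; abel
    · intro h'
      rw [← add_sub_assoc, h, add_zero, sub_eq_iff_eq_add, add_assoc, left_eq_add] at h'
      exact he (self_eq_neg.mp (eq_neg_of_add_eq_zero_left h'))
  · convert (h₁ k (by omega)).add (h₂ k (by omega)) h using 1
    rw [nsmul_add]; abel

lemma nilCone_exists_nsmul_add_mem (hn : 2 ≤ n) (hirr : ρ.IsIrreducible) {r : Fin n → ℤ}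
    (hr : r ∈ ρ.nilCone) (a : Fin n → ℤ) : ∃ k : ℕ, k • r + a ∈ ρ.nilCone := by
  obtain ⟨x, hx⟩ := hirr.1
  obtain ⟨K, hK⟩ := hr x a
  refine ⟨K + 1, ?_⟩
  rw [succ_nsmul', add_assoc]
  exact nilCone_add_of_kill hn hirr hr hx (hK K le_rfl)

variable {lam : Fin n → ℂ} {c : S →ₗ[ℂ] ℂ}

lemma grade_add_ne_bot {m α : Fin n → ℤ} (hm : ρ.grade lam c m ≠ ⊥)
    (hα : ∀ v : V, v ≠ 0 → ¬ρ.Kill α v) : ρ.grade lam c (m + α) ≠ ⊥ := by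
  obtain ⟨v, hv, hv0⟩ := Submodule.exists_mem_ne_zero_of_ne_bot hm
  intro h
  refine hα v hv0 ⟨fun u => ?_, fun s => ?_⟩
  · simpa [h] using D_mem_grade hv u α 1
  · simpa [h] using E_mem_grade hv s α 1

/-- Since the dimensions of the weight spaces are unbounded, some vector of a very large weight
space is annihilated by all operators into a prescribed finite set of weight spaces. -/
lemma exists_kill_of_finset [FiniteDimensional ℂ S] (hhc : ρ.HarishChandra)
    (hnub : ¬ρ.UniformlyBounded) (htop : ⨆ m, ρ.grade lam c m = ⊤) (F : Finset (Fin n → ℤ)) :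
    ∃ m ∉ F, ∃ v : V, v ≠ 0 ∧ ∀ t ∈ F, ρ.Kill (t - m) v := by
  have hfin : ∀ m, FiniteDimensional ℂ (ρ.grade lam c m) := fun m => hhc.2 _ _
  let ι := Module.Free.ChooseBasisIndex ℂ S
  let bS : Module.Basis ι ℂ S := Module.Free.chooseBasis ℂ S
  let W := (t : F) → (Fin n ⊕ ι) → ρ.grade lam c t
  obtain ⟨m, hm⟩ := exists_lt_finrank_grade hhc hnub htop
    (Module.finrank ℂ W + ∑ t ∈ F, Module.finrank ℂ (ρ.grade lam c t))
  have hmF : m ∉ F := fun h => by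
    have := Finset.single_le_sum (f := fun t => Module.finrank ℂ (ρ.grade lam c t))
      (fun _ _ => Nat.zero_le _) h
    omega
  let op : (Fin n → ℤ) → (Fin n ⊕ ι) → Module.End ℂ V := fun t =>
    Sum.elim (fun i => ρ.D (Pi.single i 1) (t - m) 1) (fun i => ρ.E (bS i) (t - m) 1)
  have hop : ∀ t j, ∀ x ∈ ρ.grade lam c m, op t j x ∈ ρ.grade lam c t := by
    rintro t (i | i) x hx
    · simpa [op] using D_mem_grade hx (Pi.single i 1) (t - m) 1
    · simpa [op] using E_mem_grade hx (bS i) (t - m) 1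
  let T : ρ.grade lam c m →ₗ[ℂ] W :=
    LinearMap.pi fun t => LinearMap.pi fun j => (op t j).restrict (hop t j)
  have hker : LinearMap.ker T ≠ ⊥ := LinearMap.ker_ne_bot_of_finrank_lt (by omega)
  obtain ⟨v, hv, hv0⟩ := Submodule.exists_mem_ne_zero_of_ne_bot hker
  have hz : ∀ t ∈ F, ∀ j, op t j v = 0 := fun t ht j => by
    have := congrFun (congrFun (LinearMap.mem_ker.mp hv) ⟨t, ht⟩) j
    exact congrArg Subtype.val this
  refine ⟨m, hmF, v, fun h => hv0 (Subtype.ext h), fun t ht => ⟨fun u => ?_, fun s => ?_⟩⟩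
  · have : ρ.DLin (t - m) v = 0 := by
      refine (Pi.basisFun ℂ (Fin n)).ext fun i => ?_
      rw [Pi.basisFun_apply]
      exact hz t ht (Sum.inl i)
    exact LinearMap.congr_fun this u
  · have : ρ.ELin (t - m) v = 0 := bS.ext fun i => hz t ht (Sum.inr i)
    exact LinearMap.congr_fun this s

lemma nilCone_nonempty [FiniteDimensional ℂ S] (hn : 0 < n) (hhc : ρ.HarishChandra)
    (hirr : ρ.IsIrreducible) (hnub : ¬ρ.UniformlyBounded) : ρ.nilCone.Nonempty := by
  obtain ⟨lam, c, h0⟩ := exists_grade_ne_bot hhc.1 hirr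
  let F : Finset (Fin n → ℤ) := insert 0 (Finset.univ.image (fun i => Pi.single i 1) ∪
    Finset.univ.image (fun i => Pi.single i (-1)))
  have hF : ∀ i, ∀ z : ℤ, z = 1 ∨ z = -1 → Pi.single i z ∈ F := by
    rintro i z (rfl | rfl) <;> simp [F]
  obtain ⟨m, hm, v, hv, hk⟩ := exists_kill_of_finset hhc hnub (iSup_grade_eq_top hirr h0) F
  refine ⟨-m, mem_nilCone_of_ne_zero hirr hv
    (eventually_mem_of_basis hn (kill_distinct v) ?_ ?_ fun i z hz => ⟨?_, ?_⟩)⟩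
  · rintro h
    exact hm (by rw [neg_eq_zero.mp h]; exact Finset.mem_insert_self _ _)
  · simpa using hk 0 (Finset.mem_insert_self _ _)
  · intro h
    refine hm ?_
    rw [neg_eq_iff_eq_neg.mp h, ← Pi.single_neg]
    exact hF i (-z) (by omega)
  · rw [neg_add_eq_sub]
    exact hk _ (hF i z hz)

end ExtWittRep

end LoopWitt

namespace LoopWitt

/-- Operators satisfying the Witt relations which are locally nilpotent in positive degrees, acting
on a graded space with a finite dimensional piece: the grading is bounded above. -/
lemma exists_eq_bot_of_witt {V : Type*} [AddCommGroup V] [Module ℂ V] (d : ℤ → Module.End ℂ V)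
    {q θ : ℂ} (hq : q ≠ 0)
    (hd : ∀ j l x, d j (d l x) = d l (d j x) + ((l - j) * q) • d (j + l) x)
    (A : ℤ → Submodule ℂ V) (hA : ∀ j k, ∀ x ∈ A k, d j x ∈ A (k + j))
    (h0 : ∀ k, ∀ x ∈ A k, d 0 x = (θ + k * q) • x)
    (hnil : ∀ v, ∃ J : ℕ, ∀ j : ℕ, J ≤ j → d j v = 0) [FiniteDimensional ℂ (A 0)] :
    ∃ k : ℕ, A k = ⊥ := by
  by_contra! hne
  let T : ℕ → ℕ → Prop := fun J k₀ =>
    ∃ k : ℕ, k₀ ≤ k ∧ ∃ v ∈ A k, v ≠ 0 ∧ ∀ j : ℕ, J ≤ j → d j v = 0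
  have hT : ∀ k₀, ∃ J, T J k₀ := fun k₀ => by
    obtain ⟨v, hv, hv0⟩ := Submodule.exists_mem_ne_zero_of_ne_bot (hne k₀)
    obtain ⟨J, hJ⟩ := hnil v
    exact ⟨J, k₀, le_rfl, v, hv, hv0, hJ⟩
  have hunif : ∃ J, ∀ k₀, T J k₀ := by
    by_cases h1 : ∀ k₀, T 1 k₀
    · exact ⟨1, h1⟩
    push Not at h1
    obtain ⟨k₁, hk₁⟩ := h1
    classical
    obtain ⟨J, hJ, hmin⟩ : ∃ J, T J k₁ ∧ ∀ J' < J, ¬T J' k₁ :=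
      ⟨Nat.find (hT k₁), Nat.find_spec (hT k₁), fun _ h => Nat.find_min (hT k₁) h⟩
    have hJ2 : 2 ≤ J := by
      by_contra! hlt
      obtain ⟨k, hk, v, hv, hv0, hkill⟩ := hJ
      exact hk₁ ⟨k, hk, v, hv, hv0, fun j hj => hkill j (by omega)⟩
    obtain ⟨J', rfl⟩ := Nat.exists_eq_add_of_le hJ2
    obtain ⟨k, hk, v, hv, hv0, hkill⟩ := hJ
    have hp : ∀ p : ℕ, ∃ w ∈ A (k + p * (1 + J') : ℕ), w ≠ 0 ∧ ∀ j : ℕ, 2 + J' ≤ j → d j w = 0 := by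
      intro p
      induction p with
      | zero => exact ⟨v, by simpa using hv, hv0, hkill⟩
      | succ p ih =>
        obtain ⟨w, hw, hw0, hwk⟩ := ih
        refine ⟨d (1 + J' : ℕ) w, ?_, fun hz => ?_, fun j hj => ?_⟩
        · convert hA (1 + J' : ℕ) _ w hw using 2
          push_cast
          ring
        · refine hmin (1 + J') (by omega)
            ⟨k + p * (1 + J'), by omega, w, hw, hw0, fun j hj => ?_⟩
          rcases hj.eq_or_lt with rfl | hlt
          · exact hz
          · exact hwk j (by omega)
        · have hz : d ((j : ℤ) + (1 + J' : ℕ)) w = 0 := by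
            exact_mod_cast hwk (j + (1 + J')) (by omega)
          rw [hd, hwk j hj, hz, map_zero, smul_zero, add_zero]
    refine ⟨2 + J', fun k₀ => ?_⟩
    obtain ⟨w, hw, hw0, hwk⟩ := hp k₀
    exact ⟨_, by nlinarith, w, hw, hw0, hwk⟩
  obtain ⟨J, hJ⟩ := hunif
  choose κ hκ v hv hv0 hkill using hJ
  obtain ⟨B, hB⟩ : ∃ B : ℕ, ∀ k : ℕ, B ≤ k → θ + k * q ≠ 0 := by
    by_cases h : ∃ k : ℕ, θ + k * q = 0
    · obtain ⟨k₀, hk₀⟩ := h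
      refine ⟨k₀ + 1, fun k hk h => ?_⟩
      have : ((k : ℂ) - k₀) * q = 0 := by linear_combination h - hk₀
      rcases mul_eq_zero.mp this with h' | h'
      · have : (k : ℂ) = k₀ := sub_eq_zero.mp h'
        have : k = k₀ := by exact_mod_cast this
        omega
      · exact hq h'
    · push Not at h
      exact ⟨0, fun k _ => h k⟩
  let a : ℕ → ℕ := fun i => Nat.rec (B + J + 1) (fun _ t => κ t + J + 1) i
  have ha : ∀ i, a (i + 1) = κ (a i) + J + 1 := fun _ => rfl
  have haB : ∀ i, B + J + 1 ≤ a i := by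
    intro i
    induction i with
    | zero => exact le_rfl
    | succ i ih => rw [ha]; have := hκ (a i); omega
  have hlt : ∀ i m, i < m → κ (a i) + J + 1 ≤ a m := by
    intro i m h
    induction m, h using Nat.le_induction with
    | base => exact (ha i).ge
    | succ m _ ih => rw [ha]; have := hκ (a m); omega
  have hx : ∀ i, d (-(κ (a i) : ℤ)) (v (a i)) ∈ A 0 := fun i => by
    simpa using hA (-(κ (a i) : ℤ)) _ _ (hv (a i))
  refine Module.Finite.not_linearIndependent_of_infinite (R := ℂ)
    (fun i : ℕ => (⟨_, hx i⟩ : A 0)) (linearIndependent_of_triangular _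
      (fun m => (d (κ (a m))).comp (A 0).subtype) (fun i m h => ?_) fun m => ?_)
  · have h1 := hlt i m h
    have h2 := hκ (a m)
    simp only [LinearMap.comp_apply, Submodule.subtype_apply]
    obtain ⟨e, he⟩ := Nat.exists_eq_add_of_le (show κ (a i) + J ≤ κ (a m) by omega)
    have hz : d ((κ (a m) : ℤ) + -(κ (a i) : ℤ)) (v (a i)) = 0 := by
      have := hkill (a i) (J + e) (by omega)
      rwa [show ((J + e : ℕ) : ℤ) = (κ (a m) : ℤ) + -(κ (a i) : ℤ) by rw [he]; push_cast; ring]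
        at this
    rw [hd, hkill (a i) _ (by omega), hz, map_zero, smul_zero, add_zero]
  · have h1 := haB m
    have h2 := hκ (a m)
    simp only [LinearMap.comp_apply, Submodule.subtype_apply]
    rw [hd, hkill (a m) _ (by omega), map_zero, zero_add, add_neg_cancel, h0 _ _ (hv (a m)),
      smul_smul]
    refine smul_ne_zero (mul_ne_zero (mul_ne_zero ?_ hq) ?_) (hv0 _)
    · push_cast
      intro h
      have : (κ (a m) : ℂ) = 0 := by linear_combination (-1 / 2 : ℂ) * h
      have : κ (a m) = 0 := by exact_mod_cast this
      omega
    · exact_mod_cast hB (κ (a m)) (by omega)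

namespace ExtWittRep

variable {n : ℕ} {S : Type*} [AddCommGroup S] [Module ℂ S] {V : Type*} [AddCommGroup V]
  [Module ℂ V] {ρ : ExtWittRep n S ℂ V} {lam : Fin n → ℂ} {c : S →ₗ[ℂ] ℂ}

lemma exists_grade_add_nsmul_eq_bot (hhc : ρ.HarishChandra) {r : Fin n → ℤ} (hr0 : r ≠ 0)
    (hr : r ∈ ρ.nilCone) (m : Fin n → ℤ) : ∃ k : ℕ, ρ.grade lam c (m + k • r) = ⊥ := by
  obtain ⟨u, hu⟩ := exists_pairC_ne_zero hr0
  have : FiniteDimensional ℂ (ρ.grade lam c (m + (0 : ℤ) • r)) := hhc.2 _ _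
  have := exists_eq_bot_of_witt (fun j => ρ.D u (j • r) 1) (θ := pairCC u (shiftWt lam m)) hu
    (fun j l x => ?_) (fun k => ρ.grade lam c (m + k • r)) (fun j k x hx => ?_) (fun k x hx => ?_)
    fun v => ?_
  · simpa only [natCast_zsmul] using this
  · rw [D_D, mul_one, ← sub_smul, ρ.D_smul_u, add_smul, pairC_zsmul_right, pairC_zsmul_right,
      sub_mul]
    rfl
  · have := D_mem_grade hx u (j • r) 1
    rwa [add_assoc, ← add_smul] at this
  · have := hx.1 u
    rwa [pairCC_shiftWt, pairC_add_right, pairC_zsmul_right, ← add_assoc, ← pairCC_shiftWt,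
      ← zero_smul ℤ r] at this
  · obtain ⟨K, hK⟩ := hr v 0
    refine ⟨K, fun j hj => ?_⟩
    have := (hK j hj).1 u
    rwa [add_zero, ← natCast_zsmul] at this

lemma nilCone_add_notMem (hn : 2 ≤ n) (hhc : ρ.HarishChandra) (hirr : ρ.IsIrreducible)
    (hnub : ¬ρ.UniformlyBounded) {α α' : Fin n → ℤ} (hα : α ∉ ρ.nilCone) (hα' : α' ∉ ρ.nilCone) :
    α + α' ∉ ρ.nilCone := by
  intro hr
  obtain ⟨lam, c, h0⟩ := exists_grade_ne_bot hhc.1 hirr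
  have hr0 : α + α' ≠ 0 := fun h => zero_notMem_nilCone hirr hnub (h ▸ hr)
  have hkill : ∀ γ : Fin n → ℤ, γ ∉ ρ.nilCone → ∀ v : V, v ≠ 0 → ¬ρ.Kill (3 • γ - (α + α')) v :=
    fun γ hγ v hv h => hγ (mem_nilCone_of_three_nsmul_mem
      (by simpa using nilCone_add_of_kill hn hirr hr hv h))
  have hstep : ∀ m, ρ.grade lam c m ≠ ⊥ → ρ.grade lam c (m + (α + α')) ≠ ⊥ := fun m hm => by
    have := grade_add_ne_bot (grade_add_ne_bot hm (hkill α hα)) (hkill α' hα')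
    rwa [show m + (3 • α - (α + α')) + (3 • α' - (α + α')) = m + (α + α') by abel] at this
  obtain ⟨k, hk⟩ := exists_grade_add_nsmul_eq_bot (lam := lam) (c := c) hhc hr0 hr 0
  refine absurd hk ?_
  clear hk
  induction k with
  | zero => simpa using h0
  | succ k ih => rw [succ_nsmul, ← add_assoc]; exact hstep _ ih

lemma isArchCone_nilCone (hn : 2 ≤ n) (hhc : ρ.HarishChandra) (hirr : ρ.IsIrreducible)
    (hnub : ¬ρ.UniformlyBounded) : IsArchCone ρ.nilCone where
  zero_notMem := zero_notMem_nilCone hirr hnub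
  add_mem := nilCone_add_mem (by omega)
  add_notMem := nilCone_add_notMem hn hhc hirr hnub
  exists_nsmul_add_mem := fun hr a => nilCone_exists_nsmul_add_mem hn hirr hr a

end ExtWittRep

end LoopWitt

namespace LoopWitt

/-- A vector orthogonal to `e` but not to the non-proportional vector `η`. -/
lemma exists_pairC_eq_zero_pairCC_ne_zero {n : ℕ} {e : Fin n → ℤ} {η : Fin n → ℂ}
    (h : ∃ i j, (e i : ℂ) * η j ≠ e j * η i) : ∃ w, pairC w e = 0 ∧ pairCC w η ≠ 0 := by
  obtain ⟨i, j, h⟩ := h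
  have hC : ∀ (a b : ℂ) (x : Fin n → ℂ), ∑ l, (a • Pi.single j (1 : ℂ) - b • Pi.single i (1 : ℂ) :
      Fin n → ℂ) l * x l = a * x j - b * x i := by
    intro a b x
    simp [Pi.single_apply, sub_mul, Finset.sum_sub_distrib]
  refine ⟨(e i : ℂ) • Pi.single j 1 - (e j : ℂ) • Pi.single i 1, ?_, ?_⟩
  · rw [pairC, hC]; ring
  · rw [pairCC, hC]; exact sub_ne_zero.mpr h

lemma pairCC_add_left {n : ℕ} (u v lam : Fin n → ℂ) :
    pairCC (u + v) lam = pairCC u lam + pairCC v lam := by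
  simp [pairCC, add_mul, Finset.sum_add_distrib]

namespace ExtWittRep

variable {n : ℕ} {S : Type*} [AddCommGroup S] [Module ℂ S] {V : Type*} [AddCommGroup V]
  [Module ℂ V] {ρ : ExtWittRep n S ℂ V} {lam : Fin n → ℂ} {c : S →ₗ[ℂ] ℂ}

lemma D_D_eq {u v w : Fin n → ℂ} {r s t : Fin n → ℤ} {b : ℂ} (ht : r + s = t)
    (hw : pairC u s • v - pairC v r • u = b • w) (x : V) :
    ρ.D u r 1 (ρ.D v s 1 x) = ρ.D v s 1 (ρ.D u r 1 x) + b • ρ.D w t 1 x := by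
  rw [D_D, ht, hw, mul_one, ρ.D_smul_u, LinearMap.smul_apply]

/-- The effect of a product of two raising operators on a product of two lowering operators. -/
lemma raise_lower {u w : Fin n → ℂ} {ε γ : Fin n → ℤ} {v : V} {b : ℂ} (i k : ℕ)
    (hw : pairC w ε = 0) (hb : ρ.D w 0 1 v = b • v) (h1 : ρ.Kill (k • ε) v)
    (h2 : ρ.Kill (γ - k • ε) v) (h3 : ρ.Kill (γ - (k + i) • ε) v) :
    ρ.D u (k • ε) 1 (ρ.D w (γ - k • ε) 1 (ρ.D u (-(i • ε)) 1 (ρ.D w (-γ + i • ε) 1 v))) =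
      (-2 * k * pairC u (γ - k • ε) * pairC w γ * pairC u ε * b) • v +
        (-2 * pairC w γ) • ρ.D u (k • ε) 1 (ρ.D u (-(i • ε)) 1 (ρ.D w (i • ε - k • ε) 1 v)) := by
  have hkε : ∀ k : ℕ, pairC w (k • ε) = 0 := fun k => by rw [pairC_nsmul_right, hw, mul_zero]
  rw [D_D_eq (u := w) (v := u) (w := w) (t := γ - (k + i) • ε) (b := -pairC u (γ - k • ε))
    (by rw [add_nsmul]; abel)
    (by rw [pairC_neg_right, hkε, neg_zero, zero_smul, zero_sub, neg_smul])]
  rw [D_D_eq (u := w) (v := w) (w := w) (t := i • ε - k • ε) (b := -2 * pairC w γ) (by abel)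
    (by rw [pairC_add_right, pairC_sub_right, pairC_neg_right, hkε, hkε, ← sub_smul]
        congr 1; ring), h2.1, map_zero, zero_add]
  rw [D_D_eq (u := w) (v := w) (w := w) (t := -(k • ε)) (b := -2 * pairC w γ)
    (by rw [add_nsmul]; abel)
    (by rw [pairC_add_right, pairC_sub_right, pairC_neg_right, hkε, hkε, ← sub_smul]
        congr 1; ring), h3.1, map_zero, zero_add]
  rw [map_add, map_smul, map_smul, map_smul, map_smul]
  rw [D_D_eq (u := u) (v := w) (w := w) (r := k • ε) (s := -(k • ε)) (t := 0)
    (b := -(k * pairC u ε)) (by abel)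
    (by rw [pairC_neg_right, hkε, zero_smul, sub_zero, pairC_nsmul_right]), h1.1, map_zero,
    zero_add, hb, smul_smul, smul_smul, smul_smul, add_comm]
  congr 2
  ring

/-- The cone has a minimal element: were it dense, some weight space would contain too many linearly
independent vectors. -/
lemma exists_minimal_mem_nilCone [FiniteDimensional ℂ S] (hn : 2 ≤ n) (hhc : ρ.HarishChandra)
    (hirr : ρ.IsIrreducible) (hnub : ¬ρ.UniformlyBounded) :
    ∃ β ∈ ρ.nilCone, ∀ r ∈ ρ.nilCone, β - r ∉ ρ.nilCone := by
  by_contra! hdense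
  have hO := isArchCone_nilCone hn hhc hirr hnub
  have hne := nilCone_nonempty (by omega) hhc hirr hnub
  obtain ⟨lam, c, h0⟩ := exists_grade_ne_bot hhc.1 hirr
  have hfin : ∀ m, FiniteDimensional ℂ (ρ.grade lam c m) := fun m => hhc.2 _ _
  have hsub : ∀ m, ρ.grade lam c m ≠ ⊥ → ∀ r ∈ ρ.nilCone, ρ.grade lam c (m - r) ≠ ⊥ :=
    fun m hm r hr => by
      rw [sub_eq_add_neg]
      exact grade_add_ne_bot hm fun v hv => not_kill_neg hn hirr hnub hr hv
  obtain ⟨δ, hδ⟩ := hne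
  have hδ0 : δ ≠ 0 := fun h => hO.zero_notMem (h ▸ hδ)
  obtain ⟨m₁, hm₁, hη⟩ : ∃ m₁, ρ.grade lam c m₁ ≠ ⊥ ∧ shiftWt lam m₁ ≠ 0 := by
    by_cases h : shiftWt lam 0 = 0
    · refine ⟨0 - δ, hsub 0 h0 δ hδ, fun h' => hδ0 (funext fun i => ?_)⟩
      have e1 := congrFun h i
      have e2 := congrFun h' i
      simp only [shiftWt, Pi.zero_apply, Int.cast_zero, add_zero, zero_sub, Pi.neg_apply,
        Int.cast_neg] at e1 e2
      rw [e1, zero_add, neg_eq_zero] at e2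
      exact_mod_cast e2
    · exact ⟨0, h0, h⟩
  let N := Module.finrank ℂ (ρ.grade lam c (m₁ - δ)) + 2
  obtain ⟨r₁, hr₁, g₁, havoid₁⟩ := hO.exists_avoid_line ⟨δ, hδ⟩ hη
  obtain ⟨r₂, hr₂, g₂, havoid₂⟩ := hO.exists_avoid_line ⟨δ, hδ⟩ (η := fun i => (δ i : ℂ))
    (fun h => hδ0 (funext fun i => Int.cast_eq_zero.mp (congrFun h i)))
  obtain ⟨y, hy, hy₁, hy₂⟩ := hO.exists_lt_lt hdense hr₁ hr₂
  obtain ⟨x, hx, hxy, hxδ⟩ := hO.exists_lt_lt hdense hy hδ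
  obtain ⟨ε, hε, hGε⟩ := hO.exists_nsmul_lt hdense hx (g₁ + g₂ + (2 * N + 1))
  have hsmall : ∀ z, z - x ∈ ρ.nilCone → ∀ g ≤ g₁ + g₂ + (2 * N + 1), z - g • ε ∈ ρ.nilCone := by
    intro z hz g hg
    obtain ⟨l, hl⟩ := Nat.exists_eq_add_of_le hg
    rw [hl] at hGε
    have := hO.add_nsmul_mem (hO.add_mem hz hGε) hε l
    rwa [show z - x + (x - (g + l) • ε) + l • ε = z - g • ε by rw [add_nsmul]; abel] at this
  have hx₁ : r₁ - x ∈ ρ.nilCone := by simpa using hO.add_mem hy₁ hxy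
  have hx₂ : r₂ - x ∈ ρ.nilCone := by simpa using hO.add_mem hy₂ hxy
  obtain ⟨w₁, hw₁, hw₁'⟩ := exists_pairC_eq_zero_pairCC_ne_zero
    (havoid₁ ε hε (hsmall _ hx₁ _ (by omega)))
  obtain ⟨w₂, hw₂, hw₂'⟩ := exists_pairC_eq_zero_pairCC_ne_zero
    (havoid₂ ε hε (hsmall _ hx₂ _ (by omega)))
  have hδε := hsmall δ hxδ (2 * N + 1) (by omega)
  have hε0 : ε ≠ 0 := fun h => hO.zero_notMem (h ▸ hε)
  obtain ⟨w, hwε, hwη, hwδ⟩ := exists_ne_zero_and_ne_zero (fun w => pairC w ε = 0)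
    (fun a b ha hb => by rw [pairC_add_left, ha, hb, add_zero])
    (fun w => pairCC w (shiftWt lam m₁)) (fun w => pairC w δ) (fun a b => pairCC_add_left a b _)
    (fun a b => pairC_add_left a b _) ⟨w₁, hw₁, hw₁'⟩ ⟨w₂, hw₂, hw₂'⟩
  obtain ⟨k₀, hk₀, hk₁⟩ : ∃ k₀ : ℕ, ρ.grade lam c (m₁ + k₀ • ε) ≠ ⊥ ∧
      ρ.grade lam c (m₁ + k₀ • ε + ε) = ⊥ := by
    by_contra! hcon
    obtain ⟨k, hk⟩ := exists_grade_add_nsmul_eq_bot (lam := lam) (c := c) hhc hε0 hε m₁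
    refine absurd hk ?_
    clear hk
    induction k with
    | zero => simpa using hm₁
    | succ k ih => rw [succ_nsmul, ← add_assoc]; exact hcon k ih
  let m := m₁ + k₀ • ε
  let γ := δ + k₀ • ε
  have hwm : pairCC w (shiftWt lam m) ≠ 0 := by
    rw [pairCC_shiftWt, pairC_add_right, pairC_nsmul_right, hwε, mul_zero, add_zero,
      ← pairCC_shiftWt]
    exact hwη
  have hwγ : pairC w γ ≠ 0 := by
    rw [pairC_add_right, pairC_nsmul_right, hwε, mul_zero, add_zero]
    exact hwδ
  obtain ⟨u, -, huε, hum⟩ := exists_ne_zero_and_ne_zero (fun _ => True) (fun _ _ _ _ => trivial)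
    (fun w => pairC w ε) (fun w => pairCC w (shiftWt lam m)) (fun a b => pairC_add_left a b _)
    (fun a b => pairCC_add_left a b _) (by simpa using exists_pairC_ne_zero hε0)
    ⟨w, trivial, hwm⟩
  obtain ⟨v, hv, hv0⟩ := Submodule.exists_mem_ne_zero_of_ne_bot hk₀
  have hkill : ∀ b, (b = ε ∨ b - ε ∈ ρ.nilCone) → ρ.Kill b v := by
    intro b hb
    have hbot : ρ.grade lam c (m + b) = ⊥ := by
      rcases hb with rfl | hb
      · exact hk₁
      · by_contra hcon
        refine hsub _ hcon _ hb ?_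
        rwa [show m + b - (b - ε) = m₁ + k₀ • ε + ε by simp only [m]; abel]
    refine ⟨fun u => ?_, fun s => ?_⟩
    · exact (Submodule.mem_bot ℂ).mp (hbot ▸ D_mem_grade hv u b 1)
    · exact (Submodule.mem_bot ℂ).mp (hbot ▸ E_mem_grade hv s b 1)
  have hkillε : ∀ j : ℕ, 1 ≤ j → ρ.Kill (j • ε) v := by
    intro j hj
    refine hkill _ ?_
    rcases hj.eq_or_lt with rfl | hlt
    · exact Or.inl (one_nsmul _)
    · obtain ⟨l, rfl⟩ := Nat.exists_eq_add_of_lt hlt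
      refine Or.inr ?_
      rw [succ_nsmul, add_sub_cancel_right]
      exact hO.nsmul_mem hε (by omega)
  have hkillγ : ∀ j ≤ 2 * N, ρ.Kill (γ - j • ε) v := by
    intro j hj
    refine hkill _ (Or.inr ?_)
    obtain ⟨l, hl⟩ := Nat.exists_eq_add_of_le hj
    have := hO.add_nsmul_mem hδε hε (k₀ + l)
    rw [hl] at this
    convert this using 1
    simp only [γ, add_nsmul, one_nsmul]
    abel
  let z : Fin N → V := fun i =>
    ρ.D u (-((i.val + 1) • ε)) 1 (ρ.D w (-γ + (i.val + 1) • ε) 1 v)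
  have hz : ∀ i, z i ∈ ρ.grade lam c (m₁ - δ) := fun i => by
    convert D_mem_grade (D_mem_grade hv w (-γ + (i.val + 1) • ε) 1) u (-((i.val + 1) • ε)) 1 using 2
    simp only [γ]
    abel
  let t : ℕ → ℂ := fun k =>
    -2 * k * pairC u (γ - k • ε) * pairC w γ * pairC u ε * pairCC w (shiftWt lam m)
  have hΨ : ∀ i k : Fin N, ρ.D u ((k.val + 1) • ε) 1 (ρ.D w (γ - (k.val + 1) • ε) 1 (z i)) =
      t (k.val + 1) • v + (-2 * pairC w γ) • ρ.D u ((k.val + 1) • ε) 1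
        (ρ.D u (-((i.val + 1) • ε)) 1 (ρ.D w ((i.val + 1) • ε - (k.val + 1) • ε) 1 v)) :=
    fun i k => raise_lower _ _ hwε (hv.1 w) (hkillε _ (by omega)) (hkillγ _ (by omega))
      (hkillγ _ (by omega))
  have hind : LinearIndependent ℂ
      (fun i : (Fin N)ᵒᵈ => ((⟨z (OrderDual.ofDual i), hz _⟩, 1) : ρ.grade lam c (m₁ - δ) × ℂ)) := by
    refine linearIndependent_of_triangular _ (fun k : (Fin N)ᵒᵈ =>
      LinearMap.coprod (((ρ.D u (((OrderDual.ofDual k).val + 1) • ε) 1).comp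
        (ρ.D w (γ - ((OrderDual.ofDual k).val + 1) • ε) 1)).comp (Submodule.subtype _))
        (LinearMap.toSpanSingleton ℂ V (-t ((OrderDual.ofDual k).val + 1) • v)))
      (fun i k hik => ?_) fun k => ?_
    · have hik' : (OrderDual.ofDual k).val < (OrderDual.ofDual i).val := hik
      obtain ⟨l, hl⟩ := Nat.exists_eq_add_of_lt hik'
      simp only [LinearMap.coprod_apply, LinearMap.comp_apply, Submodule.subtype_apply,
        LinearMap.toSpanSingleton_apply, one_smul]
      rw [hΨ, hl, show ((OrderDual.ofDual k).val + l + 1 + 1) • ε -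
        ((OrderDual.ofDual k).val + 1) • ε = (l + 1) • ε by simp only [add_nsmul]; abel,
        (hkillε (l + 1) (by omega)).1]
      simp
    · simp only [LinearMap.coprod_apply, LinearMap.comp_apply, Submodule.subtype_apply,
        LinearMap.toSpanSingleton_apply, one_smul]
      rw [hΨ, sub_self, hv.1 w, map_smul, map_smul, D_D_eq (u := u) (v := u) (w := u) (t := 0)
        (b := -2 * ((OrderDual.ofDual k).val + 1 : ℕ) * pairC u ε) (by abel)
        (by rw [pairC_neg_right, pairC_nsmul_right, ← sub_smul]; congr 1; ring),
        (hkillε _ (by omega)).1, map_zero, zero_add, hv.1 u, neg_smul, add_neg_cancel_comm,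
        smul_smul, smul_smul, smul_smul]
      have hk : (((OrderDual.ofDual k).val + 1 : ℕ) : ℂ) ≠ 0 :=
        Nat.cast_ne_zero.mpr (Nat.succ_ne_zero _)
      refine smul_ne_zero (mul_ne_zero ?_ ?_) hv0
      · exact mul_ne_zero (mul_ne_zero (mul_ne_zero (by norm_num) hwγ) hwm)
          (mul_ne_zero (mul_ne_zero (by norm_num) hk) huε)
      · exact hum
  have hcard := hind.fintype_card_le_finrank
  rw [Fintype.card_orderDual, Fintype.card_fin, Module.finrank_prod, Module.finrank_self] at hcard
  omega

end ExtWittRep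

end LoopWitt

namespace LoopWitt

namespace ExtWittRep

variable {n : ℕ} {S : Type*} [AddCommGroup S] [Module ℂ S] {V : Type*} [AddCommGroup V]
  [Module ℂ V] {ρ : ExtWittRep n S ℂ V} {lam : Fin n → ℂ} {c : S →ₗ[ℂ] ℂ}

variable (ρ) in
/-- The spanning operators of degree `r`. -/
inductive IsOp (r : Fin n → ℤ) : Module.End ℂ V → Prop
  | ofD (u : Fin n → ℂ) (b : ℂ) : IsOp r (ρ.D u r b)
  | ofE (s : S) (b : ℂ) : IsOp r (ρ.E s r b)

lemma IsOp.mem_grade {r m : Fin n → ℤ} {f : Module.End ℂ V} (hf : ρ.IsOp r f) {x : V}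
    (hx : x ∈ ρ.grade lam c m) : f x ∈ ρ.grade lam c (m + r) := by
  cases hf with
  | ofD u b => exact D_mem_grade hx u r b
  | ofE s b => exact E_mem_grade hx s r b

lemma IsOp.exists_commutator {r r' : Fin n → ℤ} {f g : Module.End ℂ V} (hg : ρ.IsOp r' g)
    (hf : ρ.IsOp r f) : ∃ h, ρ.IsOp (r' + r) h ∧ ∀ x, g (f x) = f (g x) + h x := by
  cases hg with
  | ofD u b =>
    cases hf with
    | ofD v a => exact ⟨_, .ofD _ _, fun x => ρ.D_D u r' b v r a x⟩
    | ofE s a =>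
      refine ⟨_, .ofE (pairC u r • s) (b * a), fun x => ?_⟩
      rw [D_E, ρ.E_smul_s, add_comm r r']
      rfl
  | ofE t b =>
    cases hf with
    | ofD v a =>
      refine ⟨_, .ofE (-pairC v r' • t) (a * b), fun x => ?_⟩
      rw [E_D, ρ.E_smul_s, sub_eq_add_neg, LinearMap.smul_apply, neg_smul]
    | ofE s a =>
      refine ⟨_, .ofE ((0 : ℂ) • t) 1, fun x => ?_⟩
      rw [E_E, ρ.E_smul_s, zero_smul, LinearMap.zero_apply, add_zero]

lemma invariant_of_isOp {U : Submodule ℂ V} (h : ∀ r f, ρ.IsOp r f → ∀ x ∈ U, f x ∈ U) :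
    ρ.Invariant U :=
  ⟨fun u r b => h r _ (.ofD u b), fun s r b => h r _ (.ofE s b)⟩

lemma invariantK_iff {M : AddSubgroup (Fin n → ℤ)} {U : Submodule ℂ V} :
    ρ.InvariantK M U ↔ ∀ r ∈ M, ∀ f, ρ.IsOp r f → ∀ x ∈ U, f x ∈ U := by
  refine ⟨fun h r hr f hf => ?_, fun h => ⟨fun u r hr b => h r hr _ (.ofD u b),
    fun s r hr b => h r hr _ (.ofE s b)⟩⟩
  cases hf with
  | ofD u b => exact h.1 u r hr b
  | ofE s b => exact h.2 s r hr b

/-- A submodule annihilated by the operators with degree in `O` generates an invariant submodule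
under the remaining operators alone. -/
lemma eq_top_of_le_of_forall_notMem (hirr : ρ.IsIrreducible) {O : Set (Fin n → ℤ)}
    {U W : Submodule ℂ V} (hU : U ≠ ⊥)
    (hkill : ∀ r ∈ O, ∀ f, ρ.IsOp r f → ∀ x ∈ U, f x = 0) (hUW : U ≤ W)
    (hW : ∀ r ∉ O, ∀ f, ρ.IsOp r f → ∀ x ∈ W, f x ∈ W) : W = ⊤ := by
  let L : Submodule ℂ V :=
    sInf {X | U ≤ X ∧ ∀ r ∉ O, ∀ f, ρ.IsOp r f → ∀ x ∈ X, f x ∈ X}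
  have hUL : U ≤ L := le_sInf fun X hX => hX.1
  have hL : ∀ r ∉ O, ∀ f, ρ.IsOp r f → ∀ x ∈ L, f x ∈ L := fun r hr f hf x hx =>
    Submodule.mem_sInf.mpr fun X hX => hX.2 r hr f hf x (Submodule.mem_sInf.mp hx X hX)
  let L' : Submodule ℂ V :=
    { carrier := {x | x ∈ L ∧ ∀ r ∈ O, ∀ f, ρ.IsOp r f → f x ∈ L}
      add_mem' := fun hx hy => ⟨L.add_mem hx.1 hy.1, fun r hr f hf => by
        rw [map_add]; exact L.add_mem (hx.2 r hr f hf) (hy.2 r hr f hf)⟩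
      zero_mem' := ⟨L.zero_mem, fun r _ f _ => by rw [map_zero]; exact L.zero_mem⟩
      smul_mem' := fun t x hx => ⟨L.smul_mem t hx.1, fun r hr f hf => by
        rw [map_smul]; exact L.smul_mem t (hx.2 r hr f hf)⟩ }
  have hLL' : L ≤ L' := by
    refine sInf_le ⟨fun x hx => ⟨hUL hx, fun r hr f hf => ?_⟩, fun r hr f hf x hx =>
      ⟨hL r hr f hf x hx.1, fun r' hr' g hg => ?_⟩⟩
    · rw [hkill r hr f hf x hx]; exact L.zero_mem
    · obtain ⟨h, hh, hcomm⟩ := hg.exists_commutator hf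
      rw [hcomm]
      refine L.add_mem (hL r hr f hf _ (hx.2 r' hr' g hg)) ?_
      by_cases hs : r' + r ∈ O
      · exact hx.2 _ hs h hh
      · exact hL _ hs h hh x hx.1
  have hinv : ρ.Invariant L := invariant_of_isOp fun r f hf x hx => by
    by_cases hr : r ∈ O
    · exact (hLL' hx).2 r hr f hf
    · exact hL r hr f hf x hx
  have htop : L = ⊤ := (hirr.2 L hinv).resolve_left fun h => hU (eq_bot_iff.mpr (h ▸ hUL))
  exact eq_top_iff.mpr (htop ▸ sInf_le ⟨hUW, hW⟩)

/-- Irreducibility of the top of an irreducible module whose weights are bounded with respect to an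
archimedean cone. -/
lemma eq_hwSpace_of_invariantK (hirr : ρ.IsIrreducible) {O : Set (Fin n → ℤ)} (hO : IsArchCone O)
    {m₀ : Fin n → ℤ} (hm₀ : ∀ r ∈ O, ρ.grade lam c (m₀ + r) = ⊥) {z : V}
    (hz : z ∈ ρ.grade lam c m₀) {U : Submodule ℂ V} (hU : U ≤ ρ.hwSpace hO.units z)
    (hinv : ρ.InvariantK hO.units U) : U = ⊥ ∨ U = ρ.hwSpace hO.units z := by
  refine or_iff_not_imp_left.mpr fun hU0 => le_antisymm hU ?_
  rw [invariantK_iff] at hinv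
  let T : Submodule ℂ V := ⨆ m ∈ {m | m - m₀ ∈ hO.units}, ρ.grade lam c m
  let Low : Submodule ℂ V := ⨆ m ∈ {m | m₀ - m ∈ O}, ρ.grade lam c m
  have hdisj : Disjoint T Low := by
    refine iSupIndep.disjoint_biSup_biSup iSupIndep_grade (Set.disjoint_left.mpr fun m hm hm' => ?_)
    refine hm.2 ?_
    rwa [neg_sub]
  have hmap : ∀ {A : Set (Fin n → ℤ)} {X : Submodule ℂ V} {r f}, ρ.IsOp r f →
      (∀ m ∈ A, ρ.grade lam c (m + r) ≤ X) → ∀ x ∈ ⨆ m ∈ A, ρ.grade lam c m, f x ∈ X :=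
    fun {A X r f} hf h x hx => mem_of_mem_iSup_grade (f := f)
      (fun m hm y hy => h m hm (hf.mem_grade hy)) hx
  have hT : ∀ r ∈ hO.units, ∀ f, ρ.IsOp r f → ∀ x ∈ T, f x ∈ T := fun r hr f hf =>
    hmap hf fun m hm => le_biSup (ρ.grade lam c) (show m + r - m₀ ∈ hO.units by
      rw [add_sub_right_comm]; exact add_mem hm hr)
  have hTO : ∀ r ∈ O, ∀ f, ρ.IsOp r f → ∀ x ∈ T, f x = 0 := fun r hr f hf x hx => by
    refine (Submodule.mem_bot ℂ).mp (hmap hf (fun m hm => ?_) x hx)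
    rw [← hm₀ (r + (m - m₀)) (hO.add_mem_of_notMem hr hm.2)]
    exact le_of_eq (congrArg _ (by abel))
  have hTneg : ∀ r, -r ∈ O → ∀ f, ρ.IsOp r f → ∀ x ∈ T, f x ∈ Low := fun r hr f hf =>
    hmap hf fun m hm => le_biSup (ρ.grade lam c) (show m₀ - (m + r) ∈ O by
      have := hO.add_mem_of_notMem hr (a := -(m - m₀)) (by rw [neg_neg]; exact hm.1)
      rwa [show m₀ - (m + r) = -r + -(m - m₀) by abel])
  have hLow : ∀ r ∉ O, ∀ f, ρ.IsOp r f → ∀ x ∈ Low, f x ∈ Low := fun r hr f hf =>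
    hmap hf fun m hm => le_biSup (ρ.grade lam c) (show m₀ - (m + r) ∈ O by
      have := hO.add_mem_of_notMem hm (a := -r) (by rwa [neg_neg])
      rwa [show m₀ - (m + r) = m₀ - m + -r by abel])
  have hhwT : ρ.hwSpace hO.units z ≤ T := by
    refine sInf_le ⟨?_, invariantK_iff.mpr hT⟩
    exact le_biSup (ρ.grade lam c) (show m₀ ∈ {m | m - m₀ ∈ hO.units} by
      change m₀ - m₀ ∈ hO.units; rw [sub_self]; exact zero_mem _) hz
  have hUT := hU.trans hhwT
  have htop : U ⊔ Low = ⊤ := by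
    refine eq_top_of_le_of_forall_notMem hirr hU0
      (fun r hr f hf x hx => hTO r hr f hf x (hUT hx)) le_sup_left fun r hr f hf x hx => ?_
    obtain ⟨y, hy, l, hl, rfl⟩ := Submodule.mem_sup.mp hx
    rw [map_add]
    refine add_mem ?_ (Submodule.mem_sup_right (hLow r hr f hf l hl))
    by_cases hr' : -r ∈ O
    · exact Submodule.mem_sup_right (hTneg r hr' f hf y (hUT hy))
    · exact Submodule.mem_sup_left (hinv r ⟨hr, hr'⟩ f hf y hy)
  intro y hy
  obtain ⟨x, hx, l, hl, rfl⟩ := Submodule.mem_sup.mp (htop ▸ Submodule.mem_top : y ∈ U ⊔ Low)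
  have hlT : l ∈ T := by
    have := T.sub_mem (hhwT hy) (hUT hx)
    rwa [add_sub_cancel_left] at this
  rw [Submodule.disjoint_def.mp hdisj l hlT hl, add_zero]
  exact hx

/-- The weights of the module have a maximal layer when the cone has a least element. -/
lemma exists_grade_maximal (hn : 2 ≤ n) (hhc : ρ.HarishChandra) (hirr : ρ.IsIrreducible)
    (hnub : ¬ρ.UniformlyBounded) {β : Fin n → ℤ} (hβ : β ∈ ρ.nilCone)
    (hmin : ∀ r ∈ ρ.nilCone, β - r ∉ ρ.nilCone) (h0 : ρ.grade lam c 0 ≠ ⊥) :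
    ∃ m₀, ρ.grade lam c m₀ ≠ ⊥ ∧ ∀ r ∈ ρ.nilCone, ρ.grade lam c (m₀ + r) = ⊥ := by
  have hO := isArchCone_nilCone hn hhc hirr hnub
  have hsub : ∀ m r, r ∈ ρ.nilCone → ρ.grade lam c (m + r) ≠ ⊥ → ρ.grade lam c m ≠ ⊥ :=
    fun m r hr hm => by
      have := grade_add_ne_bot hm fun v hv => not_kill_neg hn hirr hnub hr hv
      rwa [add_neg_cancel_right] at this
  by_contra! hcon
  have hup : ∀ k : ℕ, ∃ a, -a ∉ ρ.nilCone ∧ ρ.grade lam c (k • β + a) ≠ ⊥ := by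
    intro k
    induction k with
    | zero => exact ⟨0, by rw [neg_zero]; exact hO.zero_notMem, by simpa using h0⟩
    | succ k ih =>
      obtain ⟨a, ha, hka⟩ := ih
      obtain ⟨r, hr, hkr⟩ := hcon _ hka
      refine ⟨a + (r - β), ?_, ?_⟩
      · rw [neg_add, neg_sub]
        exact hO.add_notMem ha (hmin r hr)
      · rwa [succ_nsmul, show k • β + β + (a + (r - β)) = k • β + a + r by abel]
  have hβ0 : β ≠ 0 := fun h => hO.zero_notMem (h ▸ hβ)
  obtain ⟨k, hk⟩ := exists_grade_add_nsmul_eq_bot (lam := lam) (c := c) hhc hβ0 hβ 0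
  obtain ⟨a, ha, hka⟩ := hup (k + 1)
  rw [zero_add] at hk
  refine hsub (k • β) (β + a) (hO.add_mem_of_notMem hβ ha) ?_ hk
  rwa [← add_assoc, ← succ_nsmul]

end ExtWittRep

end LoopWitt

open LoopWitt

/-- For `n ≥ 2`, an irreducible weight `𝔏_{S,n}`-module with finite
dimensional but not uniformly bounded weight spaces is isomorphic to `L(Y, β, M)`:
it is a highest weight module for a triangular decomposition `ℤⁿ = M ⊕ ℤβ`, whose
highest weight space `Y` (the `(𝔏_{S,n})_M`-submodule generated by the highest weight
vector) is an irreducible `(𝔏_{S,n})_M`-module. -/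
theorem stmt9 {n : ℕ} (hn : 2 ≤ n) {S V : Type*}
    [AddCommGroup S] [Module ℂ S] [FiniteDimensional ℂ S]
    [AddCommGroup V] [Module ℂ V]
    (ρ : ExtWittRep n S ℂ V)
    (hhc : ρ.HarishChandra) (hirr : ρ.IsIrreducible) (hnub : ¬ ρ.UniformlyBounded) :
    ∃ (β : Fin n → ℤ) (M : AddSubgroup (Fin n → ℤ)),
      IsDirectSumDecomp M β ∧
      ∃ z : V, ρ.IsHWVector M β z ∧
        -- the highest weight space `Y` is an irreducible `(𝔏_{S,n})_M`-module
        ρ.hwSpace M z ≠ ⊥ ∧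
        ∀ U : Submodule ℂ V, U ≤ ρ.hwSpace M z → ρ.InvariantK M U →
          U = ⊥ ∨ U = ρ.hwSpace M z := by
  have hO := ExtWittRep.isArchCone_nilCone hn hhc hirr hnub
  obtain ⟨β, hβ, hmin⟩ := ExtWittRep.exists_minimal_mem_nilCone hn hhc hirr hnub
  obtain ⟨lam, c, h0⟩ := ExtWittRep.exists_grade_ne_bot hhc.1 hirr
  obtain ⟨m₀, hm₀, hmax⟩ := ExtWittRep.exists_grade_maximal hn hhc hirr hnub hβ hmin h0
  obtain ⟨z, hz, hz0⟩ := Submodule.exists_mem_ne_zero_of_ne_bot hm₀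
  have hpos : ∀ r, posDeg hO.units β r → r ∈ ρ.nilCone := by
    rintro r ⟨a, ha, d, hd, rfl⟩
    rw [add_comm]
    exact hO.add_mem_of_notMem ((hO.zsmul_mem_iff hβ).mpr hd) ha.2
  refine ⟨β, hO.units, ⟨hO.exists_eq_add_zsmul hβ hmin, fun d hd => ?_⟩, z,
    ⟨hz0, ⟨_, c, hz⟩, fun u r b hr => ?_, fun s r b hr => ?_, fun U hU hzU => ?_⟩, ?_,
    fun U hU hinv => ExtWittRep.eq_hwSpace_of_invariantK hirr hO hmax hz hU hinv⟩
  · have h1 := mt (hO.zsmul_mem_iff hβ (z := d)).mpr hd.1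
    have h2 := mt (hO.zsmul_mem_iff hβ (z := -d)).mpr (by rw [neg_smul]; exact hd.2)
    omega
  · exact (Submodule.mem_bot ℂ).mp (hmax r (hpos r hr) ▸ ExtWittRep.D_mem_grade hz u r b)
  · exact (Submodule.mem_bot ℂ).mp (hmax r (hpos r hr) ▸ ExtWittRep.E_mem_grade hz s r b)
  · exact (hirr.2 U hU).resolve_left fun h => hz0 ((Submodule.mem_bot ℂ).mp (h ▸ hzU))
  · exact fun h => hz0 ((Submodule.mem_bot ℂ).mp
      (h ▸ Submodule.mem_sInf.mpr fun U hU => hU.1))
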